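/- arXiv:2502.08477 — 8 statements merged into one kernel-verified Lean document; each statement's English description precedes it below -/
import Mathlib

section
/- Let G be a complex function holomorphic on an open neighborhood of 1 with G(1) = 1 and G'(1) = E, where E is real and E > 1. Then there exists δ > 0 and a holomorphic function Π on the open ball B(0,δ) ⊆ ℂ such that: (i) for every z ∈ B(0,δ) the points 1 + z·E^{-t} lie in the domain of the iterates for all sufficiently large t and G^{[t]}(1 + z·E^{-t}) converges to Π(z) uniformly on B(0,δ) as t → ∞; (ii) Π(0) = 1 and Π'(0) = 1; (iii) G(Π(z)) = Π(E·z) for every z with |z| < δ/E (the Poincaré functional equation). -/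
open Filter Metric Topology

/-!
A Poincaré function is a fixed point of the operator `(T F) z = G (F (z / μ))`, and the iterates
`G^[t] (p + z / μ ^ t)` are the orbit under `T` of the affine function `z ↦ p + z`. Since rescaling
by `μ` gains a factor `‖μ‖⁻²` on quadratic quantities, `T` contracts the weighted distance
`sup ‖F z - H z‖ / ‖z‖ ^ 2` by `L / ‖μ‖ ^ 2`, where `L` is a Lipschitz constant of `G` near `p`.
Such an `L` may be chosen close to `‖μ‖`, hence below `‖μ‖ ^ 2`, and the first step of the orbit has
finite weighted distance because `G` agrees with its linearization to second order.
-/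

open Function Set
open scoped NNReal

/-- Boundedness by `A` of the weighted distance `sup ‖F z - H z‖ / ‖z‖ ^ 2` over `ball 0 δ`, for
which the Poincaré operator is a contraction. Written without division, it also forces
`F 0 = H 0`. -/
def QuadraticallyClose {V W : Type*} [SeminormedAddCommGroup V] [SeminormedAddCommGroup W]
    (δ A : ℝ) (F H : V → W) : Prop :=
  ∀ z ∈ ball (0 : V) δ, ‖F z - H z‖ ≤ A * ‖z‖ ^ 2

/-- The operator whose fixed points are, for `μ ≠ 0`, the solutions of Poincaré's functional
equation `G (F z) = F (μ * z)`. -/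
def poincareOperator {𝕜 X : Type*} [Div 𝕜] (G : X → X) (μ : 𝕜) (F : 𝕜 → X) : 𝕜 → X :=
  fun z => G (F (z / μ))

namespace QuadraticallyClose

section Normed

variable {V W : Type*} [SeminormedAddCommGroup V] {δ A B : ℝ}

theorem refl [SeminormedAddCommGroup W] (hA : 0 ≤ A) (F : V → W) :
    QuadraticallyClose δ A F F := fun z _ => by
  rw [sub_self, norm_zero]
  positivity

theorem mono [SeminormedAddCommGroup W] {F H : V → W} (h : QuadraticallyClose δ A F H)
    (hAB : A ≤ B) : QuadraticallyClose δ B F H := fun z hz =>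
  (h z hz).trans (by gcongr)

theorem trans [SeminormedAddCommGroup W] {F H J : V → W} (hFH : QuadraticallyClose δ A F H)
    (hHJ : QuadraticallyClose δ B H J) : QuadraticallyClose δ (A + B) F J := fun z hz =>
  calc ‖F z - J z‖ ≤ ‖F z - H z‖ + ‖H z - J z‖ := norm_sub_le_norm_sub_add_norm_sub ..
    _ ≤ A * ‖z‖ ^ 2 + B * ‖z‖ ^ 2 := add_le_add (hFH z hz) (hHJ z hz)
    _ = (A + B) * ‖z‖ ^ 2 := (add_mul ..).symm

theorem of_tendsto [SeminormedAddCommGroup W] {F : ℕ → V → W} {f H : V → W}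
    (h : ∀ t, QuadraticallyClose δ A (F t) H)
    (hlim : ∀ z ∈ ball 0 δ, Tendsto (F · z) atTop (𝓝 (f z))) :
    QuadraticallyClose δ A f H := fun z hz =>
  le_of_tendsto' ((hlim z hz).sub_const (H z)).norm fun t => h t z hz

theorem apply_zero [NormedAddCommGroup W] {F H : V → W} (h : QuadraticallyClose δ A F H)
    (hδ : 0 < δ) : F 0 = H 0 := by
  simpa [sub_eq_zero] using h 0 (mem_ball_self hδ)

theorem mapsTo_ball {F : V → V} {p : V} {r : ℝ} (h : QuadraticallyClose δ A F (p + ·))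
    (hA : 0 ≤ A) (hAδ : A * δ ≤ 1) (hδr : 2 * δ ≤ r) : MapsTo F (ball 0 δ) (ball p r) :=
  fun z hz => by
    have hzδ : ‖z‖ < δ := mem_ball_zero_iff.1 hz
    have hAz : A * ‖z‖ ≤ 1 := (mul_le_mul_of_nonneg_left hzδ.le hA).trans hAδ
    rw [mem_ball_iff_norm]
    calc ‖F z - p‖ = ‖F z - (p + z) + z‖ := by congr 1; abel
      _ ≤ ‖F z - (p + z)‖ + ‖z‖ := norm_add_le ..
      _ ≤ A * ‖z‖ * ‖z‖ + ‖z‖ := by linarith [h z hz]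
      _ ≤ 1 * ‖z‖ + ‖z‖ := by gcongr
      _ < r := by linarith

theorem exists_tendstoUniformlyOn [NormedAddCommGroup W] [CompleteSpace W] {F : ℕ → V → W}
    {q : ℝ} (hA : 0 ≤ A) (hq0 : 0 ≤ q) (hq1 : q < 1)
    (h : ∀ t, QuadraticallyClose δ (q ^ t * A) (F (t + 1)) (F t)) :
    ∃ f, TendstoUniformlyOn F f atTop (ball 0 δ) := by
  have hdist (t : ℕ) (z : V) (hz : z ∈ ball 0 δ) :
      dist (F t z) (F (t + 1) z) ≤ A * δ ^ 2 * q ^ t := by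
    have hzδ : ‖z‖ ≤ δ := (mem_ball_zero_iff.1 hz).le
    calc dist (F t z) (F (t + 1) z) ≤ q ^ t * A * ‖z‖ ^ 2 :=
          (dist_eq_norm' ..).trans_le (h t z hz)
      _ ≤ q ^ t * A * δ ^ 2 := by gcongr
      _ = A * δ ^ 2 * q ^ t := by ring
  have hlim (z : V) : ∃ y, z ∈ ball 0 δ → Tendsto (F · z) atTop (𝓝 y) := by
    by_cases hz : z ∈ ball 0 δ
    · exact (cauchySeq_tendsto_of_complete
        (cauchySeq_of_le_geometric q _ hq1 fun t => hdist t z hz)).imp fun _ hy _ => hy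
    · exact ⟨0, fun h => absurd h hz⟩
  choose f hf using hlim
  have htail : Tendsto (fun t : ℕ => A * δ ^ 2 * q ^ t / (1 - q)) atTop (𝓝 0) := by
    simpa using ((tendsto_pow_atTop_nhds_zero_of_lt_one hq0 hq1).const_mul _).div_const (1 - q)
  refine ⟨f, Metric.tendstoUniformlyOn_iff.2 fun ε hε => ?_⟩
  filter_upwards [htail.eventually_lt_const hε] with t ht z hz
  rw [dist_comm]
  exact (dist_le_of_le_geometric_of_tendsto q _ hq1 (hdist · z hz) (hf z hz) t).trans_lt ht

end Normed

theorem hasDerivAt_zero {𝕜 W : Type*} [NontriviallyNormedField 𝕜] [NormedAddCommGroup W]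
    [NormedSpace 𝕜 W] {F H : 𝕜 → W} {H' : W} {δ A : ℝ} (h : QuadraticallyClose δ A F H)
    (hδ : 0 < δ) (hH : HasDerivAt H H' 0) : HasDerivAt F H' 0 := by
  have hO : (F - H) =O[𝓝 0] fun z : 𝕜 => ‖z - 0‖ ^ 2 := by
    refine .of_bound A ?_
    filter_upwards [ball_mem_nhds (0 : 𝕜) hδ] with z hz
    simpa using h z hz
  have hsub : HasDerivAt (F - H) 0 0 := by
    simpa using (hO.hasFDerivAt one_lt_two).hasDerivAt
  simpa using hsub.add hH

end QuadraticallyClose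

section Iterate

variable {𝕜 X : Type*} [Field 𝕜]

theorem iterate_poincareOperator_apply (G : X → X) (μ : 𝕜) (t : ℕ) (F : 𝕜 → X) (z : 𝕜) :
    (poincareOperator G μ)^[t] F z = G^[t] (F (z / μ ^ t)) := by
  induction t generalizing z with
  | zero => simp
  | succ t ih =>
    rw [iterate_succ_apply', iterate_succ_apply', poincareOperator, ih, div_div, pow_succ']

theorem iterate_eq_iterate_poincareOperator_apply {G : 𝕜 → 𝕜} {p μ : 𝕜} {k t : ℕ} (hkt : k ≤ t)
    (z : 𝕜) :
    G^[k] (p + z / μ ^ t) = (poincareOperator G μ)^[k] (p + ·) (z / μ ^ (t - k)) := by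
  rw [iterate_poincareOperator_apply, div_div, ← pow_add, Nat.sub_add_cancel hkt]

end Iterate

section Operator

variable {𝕜 X : Type*} [NormedField 𝕜] {G : X → X} {μ : 𝕜} {δ : ℝ}

theorem mapsTo_div_ball_zero (hμ : 1 ≤ ‖μ‖) : MapsTo (· / μ) (ball 0 δ) (ball 0 δ) :=
  fun z hz => by
    rw [mem_ball_zero_iff] at hz ⊢
    rw [norm_div]
    exact (div_le_self (norm_nonneg z) hμ).trans_lt hz

theorem QuadraticallyClose.poincareOperator [SeminormedAddCommGroup X] {s : Set X} {L : ℝ≥0}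
    {A : ℝ} {F H : 𝕜 → X} (h : QuadraticallyClose δ A F H) (hμ : 1 ≤ ‖μ‖)
    (hG : LipschitzOnWith L G s) (hF : MapsTo F (ball 0 δ) s) (hH : MapsTo H (ball 0 δ) s) :
    QuadraticallyClose δ (L / ‖μ‖ ^ 2 * A) (poincareOperator G μ F) (poincareOperator G μ H) :=
  fun z hz => by
    have hzμ := mapsTo_div_ball_zero hμ hz
    calc ‖G (F (z / μ)) - G (H (z / μ))‖ ≤ L * ‖F (z / μ) - H (z / μ)‖ :=
          hG.norm_sub_le (hF hzμ) (hH hzμ)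
      _ ≤ L * (A * ‖z / μ‖ ^ 2) := by gcongr; exact h _ hzμ
      _ = L / ‖μ‖ ^ 2 * A * ‖z‖ ^ 2 := by rw [norm_div]; ring

theorem poincareOperator_eq_of_tendsto [TopologicalSpace X] [T2Space X] {F f : 𝕜 → X}
    (hμ : 1 ≤ ‖μ‖)
    (hlim : ∀ z ∈ ball 0 δ, Tendsto (fun t => (poincareOperator G μ)^[t] F z) atTop (𝓝 (f z)))
    (hG : ∀ z ∈ ball 0 δ, ContinuousAt G (f z)) {z : 𝕜} (hz : z ∈ ball 0 δ) :
    poincareOperator G μ f z = f z := by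
  have hzμ := mapsTo_div_ball_zero hμ hz
  refine tendsto_nhds_unique ((hG _ hzμ).tendsto.comp (hlim _ hzμ)) ?_
  refine ((tendsto_add_atTop_iff_nat 1).2 (hlim z hz)).congr fun t => ?_
  rw [iterate_succ_apply', poincareOperator, comp_apply]

theorem quadraticallyClose_poincareOperator_const_add {G : 𝕜 → 𝕜} {p : 𝕜} {C : ℝ}
    (hμ : 1 ≤ ‖μ‖) (hG : ∀ x ∈ ball p δ, ‖G x - p - (x - p) * μ‖ ≤ C * ‖x - p‖ ^ 2) :
    QuadraticallyClose δ (C / ‖μ‖ ^ 2) (poincareOperator G μ (p + ·)) (p + ·) := fun z hz => by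
  have hμ0 : μ ≠ 0 := norm_pos_iff.1 (one_pos.trans_le hμ)
  have hx : p + z / μ ∈ ball p δ := by
    simpa using mapsTo_div_ball_zero hμ hz
  have hquad := hG _ hx
  rw [add_sub_cancel_left, div_mul_cancel₀ z hμ0, norm_div, sub_sub] at hquad
  exact hquad.trans_eq (by ring)

end Operator

section Orbit

variable {𝕜 : Type*} [NormedField 𝕜] {G : 𝕜 → 𝕜} {p μ : 𝕜} {A K r δ : ℝ} {L : ℝ≥0}

theorem quadraticallyClose_iterate_poincareOperator (hμ : 1 ≤ ‖μ‖)
    (hG : LipschitzOnWith L G (ball p r))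
    (hA : QuadraticallyClose δ A (poincareOperator G μ (p + ·)) (p + ·))
    (hK : 0 ≤ K) (hAK : L / ‖μ‖ ^ 2 * K + A ≤ K) (hKδ : K * δ ≤ 1) (hδr : 2 * δ ≤ r) (t : ℕ) :
    QuadraticallyClose δ K ((poincareOperator G μ)^[t] (p + ·)) (p + ·) := by
  induction t with
  | zero => exact .refl hK _
  | succ t ih =>
    rw [iterate_succ_apply']
    have hstep := ih.poincareOperator hμ hG (ih.mapsTo_ball hK hKδ hδr)
      ((QuadraticallyClose.refl hK _).mapsTo_ball hK hKδ hδr)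
    exact (hstep.trans hA).mono hAK

theorem quadraticallyClose_iterate_succ_poincareOperator {X : Type*}
    [SeminormedAddCommGroup X] {G : X → X} {F : 𝕜 → X} {s : Set X} (hμ : 1 ≤ ‖μ‖)
    (hG : LipschitzOnWith L G s)
    (hA : QuadraticallyClose δ A (poincareOperator G μ F) F)
    (hmaps : ∀ t, MapsTo ((poincareOperator G μ)^[t] F) (ball 0 δ) s) (t : ℕ) :
    QuadraticallyClose δ ((L / ‖μ‖ ^ 2) ^ t * A) ((poincareOperator G μ)^[t + 1] F)
      ((poincareOperator G μ)^[t] F) := by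
  induction t with
  | zero => simpa using hA
  | succ t ih =>
    rw [iterate_succ_apply' _ t, iterate_succ_apply' _ (t + 1), pow_succ', mul_assoc]
    exact ih.poincareOperator hμ hG (hmaps (t + 1)) (hmaps t)

end Orbit

section Linearization

variable {𝕜 : Type*} [NontriviallyNormedField 𝕜]

theorem isBigO_sub_linearization_of_analyticAt {W : Type*} [NormedAddCommGroup W]
    [NormedSpace 𝕜 W] {f : 𝕜 → W} {x : 𝕜} (hf : AnalyticAt 𝕜 f x) :
    (fun y => f y - f x - (y - x) • deriv f x) =O[𝓝 x] fun y => ‖y - x‖ ^ 2 := by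
  obtain ⟨P, hP⟩ := hf
  have hslope : (fun y => dslope f x y - dslope f x x) =O[𝓝 x] fun y => y - x :=
    hP.has_fpower_series_dslope_fslope.differentiableAt.isBigO_sub
  have hmul := (Asymptotics.isBigO_refl (fun y => y - x) (𝓝 x)).smul hslope
  refine (hmul.congr_left fun y => ?_).trans (.of_norm_eventuallyLE (.of_forall fun y => ?_))
  · rw [smul_sub, sub_smul_dslope, dslope_same]
  · simp [sq]

theorem exists_lipschitzOnWith_lt_norm_sq {f : 𝕜 → 𝕜} {f' x : 𝕜} (hf : HasStrictDerivAt f f' x)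
    (hf' : 1 < ‖f'‖) : ∃ L : ℝ≥0, L < ‖f'‖ ^ 2 ∧ ∃ s ∈ 𝓝 x, LipschitzOnWith L f s := by
  obtain ⟨L, hL, hL'⟩ : ∃ L : ℝ≥0, ‖f'‖₊ < L ∧ L < ‖f'‖₊ ^ 2 :=
    exists_between (lt_self_pow₀ (by exact_mod_cast hf') one_lt_two)
  exact ⟨L, by exact_mod_cast hL',
    hf.hasStrictFDerivAt.exists_lipschitzOnWith_of_nnnorm_lt L (by simpa using hL)⟩

theorem exists_quadraticallyClose_iterate_poincareOperator {G : 𝕜 → 𝕜} {p μ : 𝕜} {V : Set 𝕜}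
    (hV : V ∈ 𝓝 p) (hG : AnalyticAt 𝕜 G p) (hp : G p = p) (hG' : deriv G p = μ) (hμ : 1 < ‖μ‖) :
    ∃ δ > 0, ∃ K, (∀ F : 𝕜 → 𝕜, QuadraticallyClose δ K F (p + ·) → MapsTo F (ball 0 δ) V) ∧
      (∀ t, QuadraticallyClose δ K ((poincareOperator G μ)^[t] (p + ·)) (p + ·)) ∧
      ∃ A q : ℝ, 0 ≤ A ∧ 0 ≤ q ∧ q < 1 ∧ ∀ t, QuadraticallyClose δ (q ^ t * A)
        ((poincareOperator G μ)^[t + 1] (p + ·)) ((poincareOperator G μ)^[t] (p + ·)) := by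
  obtain ⟨L, hL, s, hs, hlip⟩ := exists_lipschitzOnWith_lt_norm_sq (hG' ▸ hG.hasStrictDerivAt) hμ
  obtain ⟨C, hC, hquad⟩ := (isBigO_sub_linearization_of_analyticAt hG).exists_pos
  obtain ⟨r, hr, hball⟩ := Metric.mem_nhds_iff.1 (inter_mem (inter_mem hV hs) hquad.bound)
  have hμ2 : 0 < ‖μ‖ ^ 2 := by positivity
  have hq : L / ‖μ‖ ^ 2 < 1 := (div_lt_one hμ2).2 hL
  obtain ⟨K, hK, hAK⟩ : ∃ K > 0, L / ‖μ‖ ^ 2 * K + C / ‖μ‖ ^ 2 ≤ K := by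
    have hgap : 0 < ‖μ‖ ^ 2 - L := sub_pos.2 hL
    exact ⟨C / (‖μ‖ ^ 2 - L), by positivity, le_of_eq (by field_simp; ring)⟩
  obtain ⟨δ, hδ, hKδ, hδr⟩ : ∃ δ > 0, K * δ ≤ 1 ∧ 2 * δ ≤ r :=
    ⟨min (1 / K) (r / 2), by positivity, (le_div_iff₀' hK).1 (min_le_left ..),
      (le_div_iff₀' two_pos).1 (min_le_right ..)⟩
  have hlip' : LipschitzOnWith L G (ball p r) := hlip.mono fun x hx => (hball hx).1.2
  have hfirst : QuadraticallyClose δ (C / ‖μ‖ ^ 2) (poincareOperator G μ (p + ·)) (p + ·) :=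
    quadraticallyClose_poincareOperator_const_add hμ.le fun x hx => by
      simpa [hp, hG'] using (hball (ball_subset_ball (by linarith) hx)).2
  have hclose := quadraticallyClose_iterate_poincareOperator hμ.le hlip' hfirst hK.le hAK hKδ hδr
  exact ⟨δ, hδ, K, fun F hF x hx => (hball (hF.mapsTo_ball hK.le hKδ hδr hx)).1.1, hclose,
    C / ‖μ‖ ^ 2, L / ‖μ‖ ^ 2, by positivity, by positivity, hq,
    quadraticallyClose_iterate_succ_poincareOperator hμ.le hlip' hfirst
      fun t => (hclose t).mapsTo_ball hK.le hKδ hδr⟩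

theorem exists_tendstoUniformlyOn_iterate_poincareOperator [CompleteSpace 𝕜] {G : 𝕜 → 𝕜}
    {p μ : 𝕜} {V : Set 𝕜} (hV : V ∈ 𝓝 p) (hG : AnalyticAt 𝕜 G p) (hp : G p = p)
    (hG' : deriv G p = μ) (hμ : 1 < ‖μ‖) :
    ∃ δ > 0, ∃ f : 𝕜 → 𝕜, MapsTo f (ball 0 δ) V ∧
      (∀ t, MapsTo ((poincareOperator G μ)^[t] (p + ·)) (ball 0 δ) V) ∧
      TendstoUniformlyOn (fun t => (poincareOperator G μ)^[t] (p + ·)) f atTop (ball 0 δ) ∧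
      f 0 = p ∧ HasDerivAt f 1 0 := by
  obtain ⟨δ, hδ, K, hmaps, hclose, A, q, hA, hq0, hq1, hsucc⟩ :=
    exists_quadraticallyClose_iterate_poincareOperator hV hG hp hG' hμ
  obtain ⟨f, hf⟩ := QuadraticallyClose.exists_tendstoUniformlyOn
    (F := fun t => (poincareOperator G μ)^[t] (p + ·)) hA hq0 hq1 hsucc
  have hfclose : QuadraticallyClose δ K f (p + ·) :=
    .of_tendsto hclose fun z hz => hf.tendsto_at hz
  exact ⟨δ, hδ, f, hmaps f hfclose, fun t => hmaps _ (hclose t), hf,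
    by simpa using hfclose.apply_zero hδ,
    hfclose.hasDerivAt_zero hδ ((hasDerivAt_id 0).const_add p)⟩

theorem differentiableOn_iterate_poincareOperator {G F : 𝕜 → 𝕜} {μ : 𝕜} {U : Set 𝕜} {δ : ℝ}
    (hμ : 1 ≤ ‖μ‖) (hG : DifferentiableOn 𝕜 G U) (hF : DifferentiableOn 𝕜 F (ball 0 δ))
    (hmaps : ∀ t, MapsTo ((poincareOperator G μ)^[t] F) (ball 0 δ) U) (t : ℕ) :
    DifferentiableOn 𝕜 ((poincareOperator G μ)^[t] F) (ball 0 δ) := by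
  induction t with
  | zero => exact hF
  | succ t ih =>
    have hdiv := mapsTo_div_ball_zero (δ := δ) hμ
    rw [iterate_succ_apply']
    exact hG.comp (ih.comp (by fun_prop) hdiv) ((hmaps t).comp hdiv)

end Linearization

theorem stmt0_general {G : ℂ → ℂ} {U : Set ℂ} {p μ : ℂ} (hU : IsOpen U) (hpU : p ∈ U)
    (hG : DifferentiableOn ℂ G U) (hp : G p = p) (hG' : deriv G p = μ) (hμ : 1 < ‖μ‖) :
    ∃ δ > (0 : ℝ), ∃ f : ℂ → ℂ,
      DifferentiableOn ℂ f (ball 0 δ) ∧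
      (∀ t, ∀ z ∈ ball (0 : ℂ) δ, ∀ k ≤ t, G^[k] (p + z / μ ^ t) ∈ U) ∧
      TendstoUniformlyOn (fun t z => G^[t] (p + z / μ ^ t)) f atTop (ball 0 δ) ∧
      f 0 = p ∧ deriv f 0 = 1 ∧
      ∀ z, ‖z‖ < δ / ‖μ‖ → G (f z) = f (μ * z) := by
  have hμ0 : 0 < ‖μ‖ := one_pos.trans hμ
  have hUn : U ∈ 𝓝 p := hU.mem_nhds hpU
  obtain ⟨δ, hδ, f, hfU, hmaps, hlim, hf0, hf'⟩ :=
    exists_tendstoUniformlyOn_iterate_poincareOperator hUn (hG.analyticAt hUn) hp hG' hμ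
  have hdiff := differentiableOn_iterate_poincareOperator hμ.le hG (by fun_prop) hmaps
  refine ⟨δ, hδ, f, hlim.tendstoLocallyUniformlyOn.differentiableOn (.of_forall hdiff) isOpen_ball,
    fun t z hz k hkt => ?_, ?_, hf0, hf'.deriv, fun z hz => ?_⟩
  · rw [iterate_eq_iterate_poincareOperator_apply hkt]
    refine hmaps k (mapsTo_div_ball_zero ?_ hz)
    simpa using one_le_pow₀ hμ.le
  · exact hlim.congr (.of_forall fun t z _ => iterate_poincareOperator_apply G μ t _ z)
  · have hμz : μ * z ∈ ball 0 δ := by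
      rwa [mem_ball_zero_iff, norm_mul, ← lt_div_iff₀' hμ0]
    have hfix := poincareOperator_eq_of_tendsto hμ.le (fun z hz => hlim.tendsto_at hz)
      (fun z hz => hG.continuousOn.continuousAt (hU.mem_nhds (hfU hz))) hμz
    rwa [poincareOperator, mul_div_cancel_left₀ z (norm_pos_iff.1 hμ0)] at hfix

/-- Existence of the Poincaré function `Π` at the repelling fixed point `1` of `G`:
`Π(z) = lim_{t→∞} G^[t](1 + z/E^t)`, satisfying `Π(0) = 1`, `Π'(0) = 1` and the
Poincaré functional equation `G(Π(z)) = Π(E z)`. -/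
theorem stmt0 (G : ℂ → ℂ) (U : Set ℂ) (hU : IsOpen U) (h1U : (1 : ℂ) ∈ U)
    (hG : DifferentiableOn ℂ G U) (hG1 : G 1 = 1)
    (E : ℝ) (hE : 1 < E) (hG'1 : deriv G 1 = (E : ℂ)) :
    ∃ δ > (0 : ℝ), ∃ Poin : ℂ → ℂ,
      DifferentiableOn ℂ Poin (ball (0 : ℂ) δ) ∧
      -- (i) for large `t` the whole forward orbit of `1 + z/E^t` up to time `t` stays in
      -- the domain `U`, and the iterates converge to `Π` uniformly on the ball
      (∀ᶠ t : ℕ in atTop, ∀ z ∈ ball (0 : ℂ) δ, ∀ k < t,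
        G^[k] (1 + z / (E : ℂ) ^ t) ∈ U) ∧
      TendstoUniformlyOn (fun (t : ℕ) (z : ℂ) => G^[t] (1 + z / (E : ℂ) ^ t))
        Poin atTop (ball (0 : ℂ) δ) ∧
      -- (ii)
      Poin 0 = 1 ∧ deriv Poin 0 = 1 ∧
      -- (iii) the Poincaré functional equation
      (∀ z : ℂ, ‖z‖ < δ / E → G (Poin z) = Poin ((E : ℂ) * z)) := by
  have hEnorm : ‖(E : ℂ)‖ = E := by rw [Complex.norm_real, Real.norm_of_nonneg (by linarith)]
  obtain ⟨δ, hδ, f, hf, hmem, hrest⟩ := stmt0_general hU h1U hG hG1 hG'1 (hE.trans_eq hEnorm.symm)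
  rw [hEnorm] at hrest
  exact ⟨δ, hδ, f, hf, .of_forall fun t z hz k hk => hmem t z hz k hk.le, hrest⟩
end

section
/- Let G be a complex function holomorphic on an open neighborhood of 0 with G(0) = 0 and G'(0) = r, where 0 < |r| < 1. Then there exists δ > 0 such that G maps the open ball B(0,δ) into itself, and the functions z ↦ r^{-t}·G^{[t]}(z) converge uniformly on B(0,δ) as t → ∞ to a holomorphic function Φ satisfying Φ(0) = 0, Φ'(0) = 1, and the Schröder functional equation Φ(G(z)) = r·Φ(z) for all z ∈ B(0,δ). -/
open Filter Metric Topology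

/-!
Since `G z = r z + O(z²)`, consecutive terms of `r⁻ᵗ Gᵗ(z)` differ by `r⁻⁽ᵗ⁺¹⁾ O(|Gᵗ(z)|²)`.
For any `c > |r|` the orbit satisfies `|Gᵗ(z)| ≤ cᵗ |z|` near `0`, so this difference is
`O((c² / |r|)ᵗ)`. As `0 < |r| < 1`, one can choose `c` with `c² < |r|`, and the sequence converges
geometrically and uniformly. Holomorphy, the derivative at `0` and the functional equation pass to
the limit.
-/

theorem exists_lt_sq_lt {a : ℝ} (ha0 : 0 < a) (ha1 : a < 1) :
    ∃ c, a < c ∧ c < 1 ∧ c ^ 2 < a := by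
  obtain ⟨c, hac, hc⟩ : ∃ c, a < c ∧ c < √a :=
    exists_between (Real.lt_sqrt_of_sq_lt (by nlinarith))
  have hca : c ^ 2 < a := (Real.lt_sqrt (ha0.trans hac).le).1 hc
  exact ⟨c, hac, by nlinarith, hca⟩

theorem isBigO_sub_sub_fderiv {𝕜 E F : Type*} [NontriviallyNormedField 𝕜]
    [NormedAddCommGroup E] [NormedSpace 𝕜 E] [NormedAddCommGroup F] [NormedSpace 𝕜 F]
    {f : E → F} {x : E} (hf : AnalyticAt 𝕜 f x) :
    (fun h => f (x + h) - f x - fderiv 𝕜 f x h) =O[𝓝 0] fun h => ‖h‖ ^ 2 := by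
  obtain ⟨p, hp⟩ := hf
  have hsum (h : E) : p.partialSum 2 h = f x + fderiv 𝕜 f x h := by
    rw [FormalMultilinearSeries.partialSum, Finset.sum_range_succ, Finset.sum_range_one,
      hp.coeff_zero, hp.hasFDerivAt.fderiv, continuousMultilinearCurryFin1_apply]
    congr 2
  simpa only [hsum, ← sub_sub] using hp.isBigO_sub_partialSum_pow 2

theorem exists_tendstoUniformlyOn_of_dist_le_of_summable {α X : Type*} [PseudoMetricSpace X]
    [CompleteSpace X] {F : ℕ → α → X} {u : ℕ → ℝ} {s : Set α} (hu : Summable u)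
    (hF : ∀ n, ∀ x ∈ s, dist (F n x) (F (n + 1) x) ≤ u n) :
    ∃ f : α → X, TendstoUniformlyOn F f atTop s := by
  have hlim (x : α) : ∃ a, x ∈ s → Tendsto (F · x) atTop (𝓝 a) := by
    by_cases hx : x ∈ s
    · obtain ⟨a, ha⟩ := cauchySeq_tendsto_of_complete
        (cauchySeq_of_dist_le_of_summable u (hF · x hx) hu)
      exact ⟨a, fun _ => ha⟩
    · exact ⟨F 0 x, fun h => absurd h hx⟩
  choose f hf using hlim
  refine ⟨f, Metric.tendstoUniformlyOn_iff.2 fun ε hε => ?_⟩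
  have htail : Tendsto (fun n => ∑' m, u (n + m)) atTop (𝓝 0) := by
    simpa only [add_comm] using tendsto_sum_nat_add u
  filter_upwards [htail.eventually_lt_const hε] with n hn x hx
  rw [dist_comm]
  exact (dist_le_tsum_of_dist_le_of_tendsto u (hF · x hx) hu (hf x hx) n).trans_lt hn

section Contraction

variable {E : Type*} [SeminormedAddCommGroup E] {G : E → E} {c : ℝ}

theorem norm_iterate_le_pow_mul_norm {s : Set E} (hc : 0 ≤ c) (hmaps : Set.MapsTo G s s)
    (hG : ∀ z ∈ s, ‖G z‖ ≤ c * ‖z‖) {z : E} (hz : z ∈ s) (t : ℕ) :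
    ‖G^[t] z‖ ≤ c ^ t * ‖z‖ :=
  le_geom (u := fun t => ‖G^[t] z‖) hc t fun k _ => by
    simpa only [Function.iterate_succ_apply'] using hG _ (hmaps.iterate k hz)

theorem mapsTo_ball_zero_of_norm_le_mul {δ : ℝ} (hc : c ≤ 1)
    (hG : ∀ z ∈ ball (0 : E) δ, ‖G z‖ ≤ c * ‖z‖) :
    Set.MapsTo G (ball 0 δ) (ball 0 δ) := fun z hz =>
  mem_ball_zero_iff.2 <|
    ((hG z hz).trans (mul_le_of_le_one_left (norm_nonneg z) hc)).trans_lt (mem_ball_zero_iff.1 hz)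

theorem eventually_norm_le_mul_of_isLittleO {𝕜 : Type*} [NormedField 𝕜] [NormedSpace 𝕜 E]
    {r : 𝕜} (hG : (fun z => G z - r • z) =o[𝓝 0] fun z => z) (hc : ‖r‖ < c) :
    ∀ᶠ z in 𝓝 0, ‖G z‖ ≤ c * ‖z‖ := by
  filter_upwards [hG.def (sub_pos.2 hc)] with z hz
  calc ‖G z‖ ≤ ‖G z - r • z‖ + ‖r • z‖ := norm_le_norm_sub_add _ _
    _ ≤ (c - ‖r‖) * ‖z‖ + ‖r‖ * ‖z‖ := add_le_add hz (norm_smul_le r z)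
    _ = c * ‖z‖ := by ring

end Contraction

/-- The normalized iterates `r⁻ᵗ Gᵗ` whose limit is the Koenigs linearizer of `G` at `0`. They are
defined for self-maps of a vector space; `r = 0` gives the junk value `0` for `t ≠ 0`. -/
def koenigsSeq {𝕜 E : Type*} [Field 𝕜] [AddCommGroup E] [Module 𝕜 E] (r : 𝕜) (G : E → E)
    (t : ℕ) (z : E) : E :=
  r⁻¹ ^ t • G^[t] z

namespace koenigsSeq

section Algebra

variable {𝕜 E : Type*} [Field 𝕜] [AddCommGroup E] [Module 𝕜 E] {r : 𝕜} {G : E → E}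

theorem apply_zero (hG0 : G 0 = 0) (t : ℕ) : koenigsSeq r G t 0 = 0 := by
  rw [koenigsSeq, Function.iterate_fixed hG0, smul_zero]

theorem apply_map (hr : r ≠ 0) (t : ℕ) (z : E) :
    koenigsSeq r G t (G z) = r • koenigsSeq r G (t + 1) z := by
  rw [koenigsSeq, koenigsSeq, Function.iterate_succ_apply, smul_smul, pow_succ',
    mul_inv_cancel_left₀ hr]

theorem succ_sub (hr : r ≠ 0) (t : ℕ) (z : E) :
    koenigsSeq r G (t + 1) z - koenigsSeq r G t z =
      r⁻¹ ^ (t + 1) • (G (G^[t] z) - r • G^[t] z) := by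
  rw [koenigsSeq, koenigsSeq, Function.iterate_succ_apply', smul_sub, smul_smul, pow_succ,
    inv_mul_cancel_right₀ hr]

theorem eq_smul_of_tendsto [TopologicalSpace E] [T2Space E] [ContinuousConstSMul 𝕜 E]
    (hr : r ≠ 0) {z a b : E} (ha : Tendsto (koenigsSeq r G · z) atTop (𝓝 a))
    (hb : Tendsto (koenigsSeq r G · (G z)) atTop (𝓝 b)) : b = r • a := by
  simp only [apply_map hr] at hb
  exact tendsto_nhds_unique hb (((tendsto_add_atTop_iff_nat 1).2 ha).const_smul r)

end Algebra

section Convergence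

variable {𝕜 E : Type*} [NormedField 𝕜] [NormedAddCommGroup E] [NormedSpace 𝕜 E]
  {r : 𝕜} {G : E → E} {s : Set E} {c C : ℝ}

theorem dist_succ_le (hr : r ≠ 0) (hc : 0 ≤ c) (hC : 0 ≤ C) (hmaps : Set.MapsTo G s s)
    (hcontr : ∀ z ∈ s, ‖G z‖ ≤ c * ‖z‖) (hquad : ∀ z ∈ s, ‖G z - r • z‖ ≤ C * ‖z‖ ^ 2)
    {z : E} (hz : z ∈ s) (t : ℕ) :
    dist (koenigsSeq r G t z) (koenigsSeq r G (t + 1) z) ≤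
      ‖r‖⁻¹ * C * ‖z‖ ^ 2 * (c ^ 2 / ‖r‖) ^ t := by
  rw [dist_comm, dist_eq_norm, succ_sub hr, norm_smul, norm_pow, norm_inv]
  calc ‖r‖⁻¹ ^ (t + 1) * ‖G (G^[t] z) - r • G^[t] z‖
      ≤ ‖r‖⁻¹ ^ (t + 1) * (C * ‖G^[t] z‖ ^ 2) := by
        gcongr
        exact hquad _ (hmaps.iterate t hz)
    _ ≤ ‖r‖⁻¹ ^ (t + 1) * (C * (c ^ t * ‖z‖) ^ 2) := by
        gcongr
        exact norm_iterate_le_pow_mul_norm hc hmaps hcontr hz t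
    _ = ‖r‖⁻¹ * C * ‖z‖ ^ 2 * (c ^ 2 / ‖r‖) ^ t := by
        rw [div_eq_mul_inv, mul_pow]
        ring

theorem exists_tendstoUniformlyOn [CompleteSpace E] (hr : r ≠ 0) (hc : 0 ≤ c)
    (hcr : c ^ 2 < ‖r‖) (hC : 0 ≤ C) (hs : Bornology.IsBounded s) (hmaps : Set.MapsTo G s s)
    (hcontr : ∀ z ∈ s, ‖G z‖ ≤ c * ‖z‖) (hquad : ∀ z ∈ s, ‖G z - r • z‖ ≤ C * ‖z‖ ^ 2) :
    ∃ Φ : E → E, TendstoUniformlyOn (koenigsSeq r G) Φ atTop s := by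
  obtain ⟨R, hR⟩ := hs.exists_norm_le
  have hgeom : Summable fun t : ℕ => (c ^ 2 / ‖r‖) ^ t :=
    summable_geometric_of_lt_one (by positivity) ((div_lt_one (norm_pos_iff.2 hr)).2 hcr)
  refine exists_tendstoUniformlyOn_of_dist_le_of_summable
    (hgeom.mul_left (‖r‖⁻¹ * C * R ^ 2)) fun t z hz => ?_
  refine (dist_succ_le hr hc hC hmaps hcontr hquad hz t).trans ?_
  gcongr
  exact hR z hz

theorem exists_ball_tendstoUniformlyOn [CompleteSpace E] (hr : r ≠ 0) (hr1 : ‖r‖ < 1)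
    (hs : s ∈ 𝓝 0) (hG : (fun z => G z - r • z) =O[𝓝 0] fun z => ‖z‖ ^ 2) :
    ∃ δ > (0 : ℝ), ball 0 δ ⊆ s ∧ Set.MapsTo G (ball 0 δ) (ball 0 δ) ∧
      ∃ Φ : E → E, TendstoUniformlyOn (koenigsSeq r G) Φ atTop (ball 0 δ) := by
  obtain ⟨c, hrc, hc1, hcr⟩ := exists_lt_sq_lt (norm_pos_iff.2 hr) hr1
  have hcontr : ∀ᶠ z in 𝓝 0, ‖G z‖ ≤ c * ‖z‖ := eventually_norm_le_mul_of_isLittleO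
    (hG.trans_isLittleO (Asymptotics.isLittleO_norm_pow_id one_lt_two)) hrc
  obtain ⟨C, hC, hGC⟩ := hG.exists_nonneg
  have hquad : ∀ᶠ z in 𝓝 0, ‖G z - r • z‖ ≤ C * ‖z‖ ^ 2 := by
    simpa only [norm_pow, norm_norm] using hGC.bound
  obtain ⟨δ, hδ, hball⟩ := Metric.eventually_nhds_iff_ball.1
    ((eventually_mem_set.2 hs).and (hcontr.and hquad))
  have hmaps : Set.MapsTo G (ball 0 δ) (ball 0 δ) :=
    mapsTo_ball_zero_of_norm_le_mul hc1.le fun z hz => (hball z hz).2.1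
  exact ⟨δ, hδ, fun z hz => (hball z hz).1, hmaps,
    exists_tendstoUniformlyOn hr ((norm_nonneg r).trans hrc.le) hcr hC isBounded_ball hmaps
      (fun z hz => (hball z hz).2.1) fun z hz => (hball z hz).2.2⟩

end Convergence

protected theorem differentiableOn {𝕜 E : Type*} [NontriviallyNormedField 𝕜] [NormedAddCommGroup E]
    [NormedSpace 𝕜 E] {r : 𝕜} {G : E → E} {s : Set E} (hG : DifferentiableOn 𝕜 G s)
    (hmaps : Set.MapsTo G s s) (t : ℕ) : DifferentiableOn 𝕜 (koenigsSeq r G t) s :=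
  (hG.iterate hmaps t).const_smul _

theorem hasDerivAt_zero {𝕜 : Type*} [NontriviallyNormedField 𝕜] {r : 𝕜} {G : 𝕜 → 𝕜}
    (hr : r ≠ 0) (hG0 : G 0 = 0) (hG : HasDerivAt G r 0) (t : ℕ) :
    HasDerivAt (koenigsSeq r G t) 1 0 := by
  have h := (HasDerivAt.iterate 0 hG hG0 t).const_smul (r⁻¹ ^ t)
  rwa [smul_eq_mul, ← mul_pow, inv_mul_cancel₀ hr, one_pow] at h

theorem deriv_eq_one_of_tendstoLocallyUniformlyOn {r : ℂ} {G Φ : ℂ → ℂ} {U : Set ℂ}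
    (hU : IsOpen U) (h0 : 0 ∈ U) (hr : r ≠ 0) (hG0 : G 0 = 0) (hG'0 : deriv G 0 = r)
    (hG : DifferentiableOn ℂ G U) (hmaps : Set.MapsTo G U U)
    (hΦ : TendstoLocallyUniformlyOn (koenigsSeq r G) Φ atTop U) : deriv Φ 0 = 1 := by
  have hG' : HasDerivAt G r 0 := hG'0 ▸ (hG.differentiableAt (hU.mem_nhds h0)).hasDerivAt
  have hderiv : Tendsto (fun t => deriv (koenigsSeq r G t) 0) atTop (𝓝 (deriv Φ 0)) :=
    (hΦ.deriv (.of_forall (koenigsSeq.differentiableOn hG hmaps)) hU).tendsto_at h0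
  simp only [(hasDerivAt_zero hr hG0 hG' _).deriv] at hderiv
  exact tendsto_nhds_unique hderiv tendsto_const_nhds

end koenigsSeq

/-- Existence of the Koenigs/Schröder linearizer `Φ` at the attracting fixed point `0`
of `G`: `Φ(z) = lim_{t→∞} r^{-t} G^[t](z)`, with `Φ(0) = 0`, `Φ'(0) = 1`, and the
Schröder functional equation `Φ(G(z)) = r·Φ(z)`. -/
theorem stmt1 (G : ℂ → ℂ) (U : Set ℂ) (hU : IsOpen U) (h0U : (0 : ℂ) ∈ U)
    (hG : DifferentiableOn ℂ G U) (hG0 : G 0 = 0)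
    (r : ℂ) (hr0 : 0 < ‖r‖) (hr1 : ‖r‖ < 1) (hG'0 : deriv G 0 = r) :
    ∃ δ > (0 : ℝ), ball (0 : ℂ) δ ⊆ U ∧
      Set.MapsTo G (ball (0 : ℂ) δ) (ball (0 : ℂ) δ) ∧
      ∃ Φ : ℂ → ℂ,
        TendstoUniformlyOn (fun (t : ℕ) (z : ℂ) => r⁻¹ ^ t * G^[t] z)
          Φ atTop (ball (0 : ℂ) δ) ∧
        DifferentiableOn ℂ Φ (ball (0 : ℂ) δ) ∧
        Φ 0 = 0 ∧ deriv Φ 0 = 1 ∧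
        ∀ z ∈ ball (0 : ℂ) δ, Φ (G z) = r * Φ z := by
  have hr : r ≠ 0 := norm_pos_iff.1 hr0
  have hquad : (fun z => G z - r • z) =O[𝓝 0] fun z => ‖z‖ ^ 2 := by
    simpa [hG0, hG'0, fderiv_eq_smul_deriv, mul_comm] using
      isBigO_sub_sub_fderiv (hG.analyticAt (hU.mem_nhds h0U))
  obtain ⟨δ, hδ, hδU, hmaps, Φ, hΦ⟩ :=
    koenigsSeq.exists_ball_tendstoUniformlyOn hr hr1 (hU.mem_nhds h0U) hquad
  have hloc := hΦ.tendstoLocallyUniformlyOn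
  have h0 : (0 : ℂ) ∈ ball 0 δ := mem_ball_self hδ
  refine ⟨δ, hδ, hδU, hmaps, Φ, hΦ, ?_, ?_, ?_, fun z hz => ?_⟩
  · exact hloc.differentiableOn
      (.of_forall (koenigsSeq.differentiableOn (hG.mono hδU) hmaps)) isOpen_ball
  · exact tendsto_nhds_unique (hΦ.tendsto_at h0)
      (by simp only [koenigsSeq.apply_zero hG0, tendsto_const_nhds])
  · exact koenigsSeq.deriv_eq_one_of_tendstoLocallyUniformlyOn isOpen_ball h0 hr hG0 hG'0
      (hG.mono hδU) hmaps hloc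
  · exact koenigsSeq.eq_smul_of_tendsto hr (hΦ.tendsto_at hz) (hΦ.tendsto_at (hmaps hz))
end

section
/- Let P, Q be complex polynomials with deg P > deg Q and Q not identically zero, let E be real with E > 1, let ω ∈ ℂ be nonzero, and let Π : ℂ → ℂ satisfy Q(Π(z))·Π(Ez) = P(Π(z)) for all z ≠ ω in some punctured neighborhood of ω. If ‖Π(z)‖ → ∞ as z → ω with z ≠ ω, then ‖Π(w)‖ → ∞ as w → Eω with w ≠ Eω. -/
open Filter Topology

/-!
Near `ω` the functional equation gives `1 / Π(Ez) = Q(Π(z)) / P(Π(z))`, and the right-hand side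
tends to `0` because `deg Q < deg P` and `Π(z) → ∞`. Since `z ↦ Ez` carries punctured
neighborhoods of `ω` onto those of `Eω`, this is a statement about `Π` at `Eω`.
-/

open Asymptotics Bornology

theorem map_mul_left₀_nhdsNE {G₀ : Type*} [GroupWithZero G₀] [TopologicalSpace G₀]
    [SeparatelyContinuousMul G₀] {c : G₀} (hc : c ≠ 0) (a : G₀) :
    map (c * ·) (𝓝[≠] a) = 𝓝[≠] (c * a) :=
  (Homeomorph.mulLeft₀ c hc).map_punctured_nhds_eq a

theorem eventually_cobounded_eval_ne_zero {R : Type*} [CommRing R] [IsDomain R] [Bornology R]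
    {P : Polynomial R} (hP : P ≠ 0) : ∀ᶠ w in cobounded R, P.eval w ≠ 0 :=
  (Polynomial.eventually_cofinite_not_isRoot hP).filter_mono (le_cofinite R)

section

variable {α 𝕜 : Type*} [NormedField 𝕜] {l : Filter α}

theorem tendsto_cobounded_of_isLittleO_of_mul_eq {f g v : α → 𝕜} (hfg : f =o[l] g)
    (hg : ∀ᶠ x in l, g x ≠ 0) (hv : ∀ᶠ x in l, f x * v x = g x) :
    Tendsto v l (cobounded 𝕜) := by
  have hfv : ∀ᶠ x in l, f x ≠ 0 ∧ v x ≠ 0 := by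
    filter_upwards [hg, hv] with x hgx hvx
    exact mul_ne_zero_iff.mp (hvx ▸ hgx)
  have hinv : (fun x => f x / g x) =ᶠ[l] v⁻¹ := by
    filter_upwards [hfv, hv] with x hx hvx
    rw [← hvx, div_mul_cancel_left₀ hx.1, Pi.inv_apply]
  have hlim : Tendsto v⁻¹ l (𝓝[≠] 0) :=
    tendsto_nhdsWithin_iff.mpr
      ⟨hfg.tendsto_div_nhds_zero.congr' hinv, hfv.mono fun _ hx => inv_ne_zero hx.2⟩
  simpa only [Function.comp_def, Pi.inv_apply, inv_inv] using tendsto_inv₀_nhdsNE_zero.comp hlim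

theorem tendsto_cobounded_of_eval_mul_eq_eval {P Q : Polynomial 𝕜} (hdeg : Q.degree < P.degree)
    {u v : α → 𝕜} (huv : ∀ᶠ x in l, Q.eval (u x) * v x = P.eval (u x))
    (hu : Tendsto u l (cobounded 𝕜)) : Tendsto v l (cobounded 𝕜) :=
  have hP : P ≠ 0 := Polynomial.ne_zero_of_degree_gt hdeg
  tendsto_cobounded_of_isLittleO_of_mul_eq
    ((Polynomial.isLittleO_cobounded_of_degree_lt hdeg).comp_tendsto hu)
    (hu.eventually (eventually_cobounded_eval_ne_zero hP)) huv

end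

theorem stmt6_general {𝕜 : Type*} [NormedField 𝕜] {P Q : Polynomial 𝕜}
    (hdeg : Q.degree < P.degree) {E : 𝕜} (hE : E ≠ 0) {ω : 𝕜} {Poin : 𝕜 → 𝕜}
    (hFE : ∀ᶠ z in 𝓝[≠] ω, Q.eval (Poin z) * Poin (E * z) = P.eval (Poin z))
    (hblow : Tendsto Poin (𝓝[≠] ω) (cobounded 𝕜)) :
    Tendsto Poin (𝓝[≠] (E * ω)) (cobounded 𝕜) := by
  rw [← map_mul_left₀_nhdsNE hE, tendsto_map'_iff]
  exact tendsto_cobounded_of_eval_mul_eq_eval hdeg hFE hblow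

/-- Propagation of poles of the Poincaré function: if `deg P > deg Q`,
`Q(Π(z))·Π(Ez) = P(Π(z))` near `ω`, and `Π` blows up at `ω`, then `Π` blows up
at `Eω` as well. -/
theorem stmt6 (P Q : Polynomial ℂ) (hQ : Q ≠ 0) (hdeg : Q.natDegree < P.natDegree)
    (E : ℝ) (hE : 1 < E) (ω : ℂ) (hω : ω ≠ 0) (Poin : ℂ → ℂ)
    (hFE : ∀ᶠ z in 𝓝[≠] ω, Q.eval (Poin z) * Poin ((E : ℂ) * z) = P.eval (Poin z))
    (hblow : Tendsto (fun z => ‖Poin z‖) (𝓝[≠] ω) atTop) :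
    Tendsto (fun w => ‖Poin w‖) (𝓝[≠] ((E : ℂ) * ω)) atTop := by
  rw [tendsto_norm_atTop_iff_cobounded] at hblow ⊢
  exact stmt6_general (Polynomial.degree_lt_degree hdeg)
    (Complex.ofReal_ne_zero.mpr (zero_lt_one.trans hE).ne') hFE hblow
end

section
/- Let E > 1 and 0 < r < 1 be real. Then there exists B > 0 such that for every integer n and every natural number m ≥ 1, setting x_m := -m·ln r/ln E > 0 and ρ_{n,m} := √(4π²n² + m²(ln r)²)/ln E, the complex Gamma function satisfies ‖Γ(-(2πin + m·ln r)/ln E)‖ ≥ B · ρ_{n,m}^{x_m - 1} · e^{-x_m} · e^{-π²|n|/ln E}. -/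
open Real Complex

/-!
For `x = re z > 0` the bound holds with constant `1`, and even in the sharper form
`‖z ^ (z - 1) * exp (-z)‖ ≤ ‖Γ(z)‖`, of which the stated one keeps only `|arg z| ≤ π / 2`.
By Euler's limit formula `Γ(x + 1) / ‖Γ(z + 1)‖ = ∏ j ≥ 1, ‖z + j‖ / (x + j)`. Since
`‖(z + s) ^ z‖ / (x + s) ^ x` increases with `s ≥ 0`, multiplying `A(z) = ‖z ^ z‖ / x ^ x` by the
factor with `j = 1` gives at most `A(z + 1)`. The product therefore telescopes, and with `y = im z`
the bound `A(z + n) ≤ exp (y ^ 2 / (2 * (x + n))) → 1` yields `A(z) Γ(x + 1) ≤ ‖Γ(z + 1)‖`. On the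
real axis, restricting Euler's integral to `t > x` gives `x ^ x * exp (-x) ≤ Γ(x + 1)`.
-/

open Filter Topology Finset

lemma rpow_self_mul_exp_neg_le_Gamma_add_one {x : ℝ} (hx : 0 ≤ x) :
    x ^ x * Real.exp (-x) ≤ Real.Gamma (x + 1) := by
  have hint : MeasureTheory.IntegrableOn (fun t : ℝ ↦ Real.exp (-t) * t ^ x) (Set.Ioi 0) := by
    simpa using Real.GammaIntegral_convergent (s := x + 1) (by positivity)
  have hsub : Set.Ioi x ⊆ Set.Ioi 0 := Set.Ioi_subset_Ioi hx
  calc x ^ x * Real.exp (-x) = ∫ t in Set.Ioi x, Real.exp (-t) * x ^ x := by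
        rw [MeasureTheory.integral_mul_const, integral_exp_neg_Ioi, mul_comm]
    _ ≤ ∫ t in Set.Ioi x, Real.exp (-t) * t ^ x := by
        refine MeasureTheory.setIntegral_mono_on ((integrableOn_exp_neg_Ioi x).mul_const _)
          (hint.mono_set hsub) measurableSet_Ioi fun t (ht : x < t) ↦ ?_
        gcongr
    _ ≤ ∫ t in Set.Ioi 0, Real.exp (-t) * t ^ x :=
        MeasureTheory.setIntegral_mono_set hint
          (MeasureTheory.ae_restrict_of_forall_mem measurableSet_Ioi fun t (ht : 0 < t) ↦
            by positivity)
          hsub.eventuallyLE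
    _ = Real.Gamma (x + 1) := by
        rw [Real.Gamma_eq_integral (by positivity), add_sub_cancel_right]

lemma arg_mul_im_nonneg (z : ℂ) : 0 ≤ z.arg * z.im := by
  rcases le_or_gt 0 z.im with h | h
  · exact mul_nonneg (arg_nonneg_iff.mpr h) h
  · exact mul_nonneg_of_nonpos_of_nonpos (arg_neg_iff.mpr h).le h.le

lemma re_div_re_add_le_re_div_add {z : ℂ} (hz : 0 < z.re) {s : ℝ} (hs : 0 ≤ s) :
    z.re / (z.re + s) ≤ (z / (z + s)).re := by
  have hre : 0 < (z + s).re := by simpa using add_pos_of_pos_of_nonneg hz hs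
  have hinv : ((z + s)⁻¹).re ≤ (z.re + s)⁻¹ := by
    calc ((z + s)⁻¹).re ≤ ‖(z + s)⁻¹‖ := re_le_norm _
      _ ≤ ((z + s).re)⁻¹ := by
          rw [norm_inv]
          exact inv_anti₀ hre (re_le_norm _)
      _ = (z.re + s)⁻¹ := by simp
  have hdiv : z / (z + s) = 1 - s * (z + s)⁻¹ := by
    rw [← div_eq_mul_inv, eq_sub_iff_add_eq, ← add_div, div_self (ne_zero_of_re_pos hre)]
  calc z.re / (z.re + s) = 1 - s * (z.re + s)⁻¹ := by
        have : z.re + s ≠ 0 := by positivity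
        field_simp
        ring
    _ ≤ 1 - s * ((z + s)⁻¹).re := by gcongr
    _ = (z / (z + s)).re := by rw [hdiv, sub_re, one_re, re_ofReal_mul]

lemma monotoneOn_re_mul_log_add_sub {z : ℂ} (hz : 0 < z.re) :
    MonotoneOn (fun s : ℝ ↦ (z * Complex.log (z + s)).re - z.re * Real.log (z.re + s))
      (Set.Ici 0) := by
  have hderiv (s : ℝ) (hs : 0 ≤ s) :
      HasDerivAt (fun s : ℝ ↦ (z * Complex.log (z + s)).re - z.re * Real.log (z.re + s))
        ((z / (z + s)).re - z.re / (z.re + s)) s := by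
    have hslit : z + s ∈ slitPlane := Or.inl (by simpa using add_pos_of_pos_of_nonneg hz hs)
    have hc := (((ofRealCLM.hasDerivAt (x := s)).const_add z).clog_real hslit).const_mul z
    have hr := (((hasDerivAt_id s).const_add z.re).log
      (add_pos_of_pos_of_nonneg hz hs).ne').const_mul z.re
    have h := (reCLM.hasFDerivAt.comp_hasDerivAt s hc).sub hr
    simp only [ofRealCLM_apply, reCLM_apply, ofReal_one, mul_one_div, id] at h
    exact h
  exact monotoneOn_of_hasDerivWithinAt_nonneg (convex_Ici 0)
    (fun s hs ↦ (hderiv s hs).continuousAt.continuousWithinAt)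
    (fun s hs ↦ (hderiv s (interior_subset hs)).hasDerivWithinAt)
    fun s hs ↦ sub_nonneg.mpr (re_div_re_add_le_re_div_add hz (interior_subset hs))

lemma norm_cpow_div_rpow_eq_exp {w : ℂ} (hw : w ≠ 0) {u : ℝ} (hu : 0 < u) (z : ℂ) (x : ℝ) :
    ‖w ^ z‖ / u ^ x = Real.exp ((z * Complex.log w).re - x * Real.log u) := by
  rw [cpow_def_of_ne_zero hw, Complex.norm_exp, Real.rpow_def_of_pos hu, Real.exp_sub,
    mul_comm z, mul_comm x]

lemma monotoneOn_norm_add_cpow_div_rpow {z : ℂ} (hz : 0 < z.re) :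
    MonotoneOn (fun s : ℝ ↦ ‖(z + s) ^ z‖ / (z.re + s) ^ z.re) (Set.Ici 0) := by
  refine (Real.exp_monotone.comp_monotoneOn (monotoneOn_re_mul_log_add_sub hz)).congr
    fun s (hs : 0 ≤ s) ↦ ?_
  have hpos : 0 < z.re + s := by positivity
  exact (norm_cpow_div_rpow_eq_exp (ne_zero_of_re_pos (by simpa using hpos)) hpos _ _).symm

/-- The ratio `‖z ^ z‖ / x ^ x` with `x = re z`, which compares the main Stirling factors of
`Γ(z + 1)` and `Γ(x + 1)`. It is meant for `x > 0`. -/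
noncomputable def selfPowRatio (z : ℂ) : ℝ := ‖z ^ z‖ / z.re ^ z.re

lemma norm_add_one_div_mul_selfPowRatio_le {z : ℂ} (hz : 0 < z.re) :
    ‖z + 1‖ / (z.re + 1) * selfPowRatio z ≤ selfPowRatio (z + 1) := by
  have hpos : 0 < z.re + 1 := by positivity
  have hz1 : z + 1 ≠ 0 := ne_zero_of_re_pos (by simpa using hpos)
  have hmono : selfPowRatio z ≤ ‖(z + 1) ^ z‖ / (z.re + 1) ^ z.re := by
    simpa [selfPowRatio] using monotoneOn_norm_add_cpow_div_rpow hz Set.self_mem_Ici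
      (Set.mem_Ici.mpr zero_le_one) zero_le_one
  calc ‖z + 1‖ / (z.re + 1) * selfPowRatio z
      ≤ ‖z + 1‖ / (z.re + 1) * (‖(z + 1) ^ z‖ / (z.re + 1) ^ z.re) := by gcongr
    _ = selfPowRatio (z + 1) := by
        rw [selfPowRatio, add_re, one_re, cpow_add _ _ hz1, cpow_one, norm_mul,
          Real.rpow_add_one hpos.ne', div_mul_div_comm, mul_comm ‖z + 1‖, mul_comm (z.re + 1)]

lemma prod_norm_div_mul_selfPowRatio_le {z : ℂ} (hz : 0 < z.re) (n : ℕ) :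
    (∏ j ∈ range n, ‖z + 1 + j‖ / ((z + 1).re + j)) * selfPowRatio z ≤ selfPowRatio (z + n) := by
  induction n with
  | zero => simp
  | succ n ih =>
    have hstep := norm_add_one_div_mul_selfPowRatio_le (z := z + n)
      (by simpa using add_pos_of_pos_of_nonneg hz n.cast_nonneg)
    have hfactor : ‖z + n + 1‖ / ((z + n).re + 1) = ‖z + 1 + n‖ / ((z + 1).re + n) := by
      simp [add_right_comm]
    have hnonneg : 0 ≤ ‖z + 1 + n‖ / ((z + 1).re + n) := by
      rw [add_re, one_re]
      positivity
    calc (∏ j ∈ range (n + 1), ‖z + 1 + j‖ / ((z + 1).re + j)) * selfPowRatio z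
        = ‖z + 1 + n‖ / ((z + 1).re + n) *
            ((∏ j ∈ range n, ‖z + 1 + j‖ / ((z + 1).re + j)) * selfPowRatio z) := by
          rw [prod_range_succ]
          ring
      _ ≤ ‖z + 1 + n‖ / ((z + 1).re + n) * selfPowRatio (z + n) := by gcongr
      _ ≤ selfPowRatio (z + (n + 1 : ℕ)) := by
          rw [← hfactor]
          simpa [add_assoc] using hstep

lemma norm_le_re_mul_exp {z : ℂ} (hz : 0 < z.re) :
    ‖z‖ ≤ z.re * Real.exp (z.im ^ 2 / (2 * z.re ^ 2)) := by
  refine le_of_sq_le_sq ?_ (by positivity)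
  calc ‖z‖ ^ 2 = z.re ^ 2 * (z.im ^ 2 / z.re ^ 2 + 1) := by
        rw [← normSq_eq_norm_sq, normSq_apply]
        field_simp
        ring
    _ ≤ z.re ^ 2 * Real.exp (z.im ^ 2 / z.re ^ 2) := by
        gcongr
        exact Real.add_one_le_exp _
    _ = (z.re * Real.exp (z.im ^ 2 / (2 * z.re ^ 2))) ^ 2 := by
        rw [mul_pow, ← Real.exp_nat_mul]
        congr 2
        push_cast
        field_simp

lemma selfPowRatio_le_exp {z : ℂ} (hz : 0 < z.re) :
    selfPowRatio z ≤ Real.exp (z.im ^ 2 / (2 * z.re)) := by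
  rw [selfPowRatio, div_le_iff₀ (by positivity)]
  calc ‖z ^ z‖ = ‖z‖ ^ z.re / Real.exp (z.arg * z.im) :=
        norm_cpow_of_ne_zero (ne_zero_of_re_pos hz) z
    _ ≤ ‖z‖ ^ z.re :=
        div_le_self (by positivity) (Real.one_le_exp (arg_mul_im_nonneg z))
    _ ≤ (z.re * Real.exp (z.im ^ 2 / (2 * z.re ^ 2))) ^ z.re := by
        gcongr
        exact norm_le_re_mul_exp hz
    _ = Real.exp (z.im ^ 2 / (2 * z.re)) * z.re ^ z.re := by
        rw [Real.mul_rpow hz.le (Real.exp_pos _).le, ← Real.exp_mul, mul_comm]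
        congr 2
        field_simp

lemma GammaSeq_re_eq_prod_mul_norm_GammaSeq {s : ℂ} (hs : 0 < s.re) (n : ℕ) :
    Real.GammaSeq s.re n =
      (∏ j ∈ range (n + 1), ‖s + j‖ / (s.re + j)) * ‖Complex.GammaSeq s n‖ := by
  have hne : ∏ j ∈ range (n + 1), ‖s + j‖ ≠ 0 := by
    refine prod_ne_zero_iff.mpr fun j _ ↦ norm_ne_zero_iff.mpr (ne_zero_of_re_pos ?_)
    simpa using add_pos_of_pos_of_nonneg hs j.cast_nonneg
  rw [Real.GammaSeq, Complex.GammaSeq, norm_div, norm_mul, norm_prod,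
    norm_natCast_cpow_of_re_ne_zero n hs.ne', Complex.norm_natCast, prod_div_distrib,
    div_mul_div_comm, mul_comm (∏ j ∈ range (n + 1), ‖s + j‖), mul_div_mul_right _ _ hne]

lemma selfPowRatio_mul_GammaSeq_le {z : ℂ} (hz : 0 < z.re) (n : ℕ) :
    selfPowRatio z * Real.GammaSeq (z.re + 1) n ≤
      Real.exp (z.im ^ 2 / (2 * (z.re + (n + 1 : ℕ)))) * ‖Complex.GammaSeq (z + 1) n‖ := by
  have hpos : 0 < z.re + 1 := by positivity
  have hseq := GammaSeq_re_eq_prod_mul_norm_GammaSeq (s := z + 1) (by simpa using hpos) n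
  have hexp := selfPowRatio_le_exp (z := z + (n + 1 : ℕ))
    (by simpa using add_pos_of_pos_of_nonneg hz (n + 1).cast_nonneg)
  rw [add_re, add_im, natCast_re, natCast_im, add_zero] at hexp
  calc selfPowRatio z * Real.GammaSeq (z.re + 1) n
      = (∏ j ∈ range (n + 1), ‖z + 1 + j‖ / ((z + 1).re + j)) * selfPowRatio z *
          ‖Complex.GammaSeq (z + 1) n‖ := by
        rw [← one_re, ← add_re, hseq]
        ring
    _ ≤ Real.exp (z.im ^ 2 / (2 * (z.re + (n + 1 : ℕ)))) * ‖Complex.GammaSeq (z + 1) n‖ := by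
        gcongr
        exact (prod_norm_div_mul_selfPowRatio_le hz (n + 1)).trans hexp

lemma selfPowRatio_mul_Gamma_add_one_le {z : ℂ} (hz : 0 < z.re) :
    selfPowRatio z * Real.Gamma (z.re + 1) ≤ ‖Complex.Gamma (z + 1)‖ := by
  have hexp : Tendsto (fun n : ℕ ↦ Real.exp (z.im ^ 2 / (2 * (z.re + (n + 1 : ℕ))))) atTop
      (𝓝 1) := by
    have hden : Tendsto (fun n : ℕ ↦ 2 * (z.re + (n + 1 : ℕ))) atTop atTop :=
      (tendsto_atTop_add_const_left _ _ ((tendsto_natCast_atTop_atTop (R := ℝ)).comp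
        (tendsto_add_atTop_nat 1))).const_mul_atTop two_pos
    simpa using (hden.const_div_atTop (z.im ^ 2)).rexp
  simpa using le_of_tendsto_of_tendsto' ((Real.GammaSeq_tendsto_Gamma _).const_mul _)
    (hexp.mul (Complex.GammaSeq_tendsto_Gamma _).norm) (selfPowRatio_mul_GammaSeq_le hz)

lemma norm_cpow_self_mul_exp_neg_le_norm_Gamma_add_one {z : ℂ} (hz : 0 < z.re) :
    ‖z ^ z * Complex.exp (-z)‖ ≤ ‖Complex.Gamma (z + 1)‖ := by
  calc ‖z ^ z * Complex.exp (-z)‖ = selfPowRatio z * (z.re ^ z.re * Real.exp (-z.re)) := by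
        rw [selfPowRatio, norm_mul, Complex.norm_exp, neg_re, ← mul_assoc,
          div_mul_cancel₀ _ (by positivity)]
    _ ≤ selfPowRatio z * Real.Gamma (z.re + 1) := by
        have : 0 ≤ selfPowRatio z := by unfold selfPowRatio; positivity
        gcongr
        exact rpow_self_mul_exp_neg_le_Gamma_add_one hz.le
    _ ≤ ‖Complex.Gamma (z + 1)‖ := selfPowRatio_mul_Gamma_add_one_le hz

lemma norm_cpow_sub_one_mul_exp_neg_le_norm_Gamma {z : ℂ} (hz : 0 < z.re) :
    ‖z ^ (z - 1) * Complex.exp (-z)‖ ≤ ‖Complex.Gamma z‖ := by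
  have hz0 : z ≠ 0 := ne_zero_of_re_pos hz
  refine le_of_mul_le_mul_left ?_ (norm_pos_iff.mpr hz0)
  calc ‖z‖ * ‖z ^ (z - 1) * Complex.exp (-z)‖ = ‖z ^ z * Complex.exp (-z)‖ := by
        rw [← norm_mul, cpow_sub _ _ hz0, cpow_one]
        field_simp
    _ ≤ ‖Complex.Gamma (z + 1)‖ := norm_cpow_self_mul_exp_neg_le_norm_Gamma_add_one hz
    _ = ‖z‖ * ‖Complex.Gamma z‖ := by rw [Complex.Gamma_add_one z hz0, norm_mul]

lemma norm_rpow_mul_exp_mul_exp_le_norm_Gamma {z : ℂ} (hz : 0 < z.re) :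
    ‖z‖ ^ (z.re - 1) * Real.exp (-z.re) * Real.exp (-(π / 2 * |z.im|)) ≤ ‖Complex.Gamma z‖ := by
  have harg : z.arg * z.im ≤ π / 2 * |z.im| :=
    calc z.arg * z.im ≤ |z.arg| * |z.im| := (le_abs_self _).trans (abs_mul _ _).le
      _ ≤ π / 2 * |z.im| := by
          gcongr
          exact abs_arg_le_pi_div_two_iff.mpr hz.le
  calc ‖z‖ ^ (z.re - 1) * Real.exp (-z.re) * Real.exp (-(π / 2 * |z.im|))
      ≤ ‖z‖ ^ (z.re - 1) * Real.exp (-z.re) * Real.exp (-(z.arg * z.im)) := by gcongr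
    _ = ‖z ^ (z - 1) * Complex.exp (-z)‖ := by
        rw [norm_mul, Complex.norm_exp, norm_cpow_of_ne_zero (ne_zero_of_re_pos hz), sub_re,
          sub_im, one_re, one_im, sub_zero, neg_re, Real.exp_neg (z.arg * z.im)]
        ring
    _ ≤ ‖Complex.Gamma z‖ := norm_cpow_sub_one_mul_exp_neg_le_norm_Gamma hz

theorem stmt11_general {E r : ℝ} (hE : 1 < E) (hr0 : 0 < r) (hr1 : r < 1) (n : ℝ) {m : ℝ}
    (hm : 0 < m) :
    (Real.sqrt (4 * π ^ 2 * n ^ 2 + m ^ 2 * Real.log r ^ 2) /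
          Real.log E) ^ (-m * Real.log r / Real.log E - 1) *
        Real.exp (-(-m * Real.log r / Real.log E)) *
        Real.exp (-π ^ 2 * |n| / Real.log E) ≤
      ‖Complex.Gamma (-(2 * (π : ℂ) * Complex.I * (n : ℂ) +
          (m : ℂ) * (Real.log r : ℂ)) / (Real.log E : ℂ))‖ := by
  have hlogE : 0 < Real.log E := Real.log_pos hE
  set w : ℂ := -(2 * (π : ℂ) * Complex.I * (n : ℂ) + (m : ℂ) * (Real.log r : ℂ)) with hw
  have hwre : w.re = -m * Real.log r := by simp [hw]
  have hwim : w.im = -(2 * π * n) := by simp [hw]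
  have hre : (w / Real.log E).re = -m * Real.log r / Real.log E := by rw [div_ofReal_re, hwre]
  have him : π / 2 * |(w / Real.log E).im| = π ^ 2 * |n| / Real.log E := by
    rw [div_ofReal_im, hwim, abs_div, abs_neg, abs_mul, abs_of_pos hlogE,
      abs_of_pos Real.two_pi_pos]
    ring
  have hnorm : ‖w / Real.log E‖ =
      Real.sqrt (4 * π ^ 2 * n ^ 2 + m ^ 2 * Real.log r ^ 2) / Real.log E := by
    rw [norm_div, norm_real, Real.norm_of_nonneg hlogE.le, norm_def, normSq_apply, hwre, hwim]
    ring_nf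
  have hpos : 0 < (w / Real.log E).re := by
    rw [hre]
    exact div_pos (mul_pos_of_neg_of_neg (neg_neg_of_pos hm) (Real.log_neg hr0 hr1)) hlogE
  simpa only [hre, him, hnorm, neg_mul, neg_div] using norm_rpow_mul_exp_mul_exp_le_norm_Gamma hpos

/-- Estimate (20) of the paper: a Stirling-type lower bound for the complex Gamma
function at the points `z = -(2πin + m ln r)/ln E`, whose real part is
`x_m = -m ln r/ln E` and modulus is `ρ_{n,m} = √(4π²n² + m²(ln r)²)/ln E`. -/
theorem stmt11 (E r : ℝ) (hE : 1 < E) (hr0 : 0 < r) (hr1 : r < 1) :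
    ∃ B > (0 : ℝ), ∀ (n : ℤ) (m : ℕ), 1 ≤ m →
      B * (Real.sqrt (4 * π ^ 2 * (n : ℝ) ^ 2 + (m : ℝ) ^ 2 * Real.log r ^ 2) /
            Real.log E) ^ (-(m : ℝ) * Real.log r / Real.log E - 1) *
          Real.exp (-(-(m : ℝ) * Real.log r / Real.log E)) *
          Real.exp (-π ^ 2 * |(n : ℝ)| / Real.log E) ≤
        ‖Complex.Gamma (-(2 * (π : ℂ) * Complex.I * (n : ℂ) +
            (m : ℂ) * (Real.log r : ℂ)) / (Real.log E : ℂ))‖ := by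
  exact ⟨1, one_pos, fun n m hm ↦ by
    simpa using stmt11_general hE hr0 hr1 n (m := m) (by exact_mod_cast hm)⟩
end

section
/- Let E > 1 and 0 < r < 1 be real, and let K₀, C > 0 and γ > π²/ln E be real constants. Let κ : ℕ → ℂ and θ : ℤ × ℕ → ℂ satisfy |κ_m| ≤ K₀^m and |θ_{n,m}| ≤ C^m·e^{-γ|n|} for all m ≥ 1 and n ∈ ℤ. Then there exist constants A, α, β > 0 such that for all m ≥ 1 and n ∈ ℤ: ‖κ_m·θ_{n,m} / Γ(-(2πin + m·ln r)/ln E)‖ ≤ A·exp(-α·m·ln(m + |n|) − β·|n|). -/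
open Real Complex

/-! The Beta integral is largest in norm at the real parts of its arguments. Hence the ratio
`‖Γ z‖ / Γ (re z)` is supermultiplicative, and in particular does not decrease when a positive real
number is added to `z`. On the line `re z = 1/2` the reflection formula evaluates it exactly, as
`(cosh (π im z))^(-1/2) ≥ exp (-π |im z| / 2)`, so this lower bound holds for all `re z > 1/2`.
Together with `Γ (x + 1) ≥ exp (x log x - x)` it bounds `1 / Γ z = z / Γ (z + 1)`. At
`z = ρ t + i b s` the bound costs `exp (π |b| |s| / 2)`, which `exp (-γ |s|)` absorbs with room to
spare, and gains `exp (-ρ t log t)`, which absorbs every `M ^ t`. -/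

lemma norm_cpow_mul_one_sub_cpow {x : ℝ} (hx : x ∈ Set.Ioo (0 : ℝ) 1) (u v : ℂ) :
    ‖(x : ℂ) ^ u * (1 - (x : ℂ)) ^ v‖ = x ^ u.re * (1 - x) ^ v.re := by
  rw [norm_mul, Complex.norm_cpow_eq_rpow_re_of_pos hx.1, ← ofReal_one, ← ofReal_sub,
    Complex.norm_cpow_eq_rpow_re_of_pos (sub_pos.2 hx.2)]

lemma betaIntegral_ofReal (a b : ℝ) :
    betaIntegral a b = ((∫ x in (0 : ℝ)..1, x ^ (a - 1) * (1 - x) ^ (b - 1) : ℝ) : ℂ) := by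
  rw [betaIntegral, ← intervalIntegral.integral_ofReal]
  refine intervalIntegral.integral_congr_Ioo_of_le zero_le_one fun x hx ↦ ?_
  push_cast [Complex.ofReal_cpow hx.1.le, Complex.ofReal_cpow (sub_pos.2 hx.2).le]
  rfl

lemma norm_betaIntegral_le_beta {u v : ℂ} (hu : 0 < u.re) (hv : 0 < v.re) :
    ‖betaIntegral u v‖ ≤ ProbabilityTheory.beta u.re v.re := by
  rw [ProbabilityTheory.beta_eq_betaIntegralReal _ _ hu hv, betaIntegral_ofReal, ofReal_re]
  refine (intervalIntegral.norm_integral_le_integral_norm zero_le_one).trans_eq ?_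
  refine intervalIntegral.integral_congr_Ioo_of_le zero_le_one fun x hx ↦ ?_
  simpa using norm_cpow_mul_one_sub_cpow hx (u - 1) (v - 1)

lemma norm_Gamma_div_mul_norm_Gamma_div_le {u v : ℂ} (hu : 0 < u.re) (hv : 0 < v.re) :
    ‖Complex.Gamma u‖ / Real.Gamma u.re * (‖Complex.Gamma v‖ / Real.Gamma v.re) ≤
      ‖Complex.Gamma (u + v)‖ / Real.Gamma (u + v).re := by
  have hΓu := Real.Gamma_pos_of_pos hu
  have hΓv := Real.Gamma_pos_of_pos hv
  have hbeta : ‖Complex.Gamma u‖ * ‖Complex.Gamma v‖ ≤ ‖Complex.Gamma (u + v)‖ *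
      (Real.Gamma u.re * Real.Gamma v.re / Real.Gamma (u + v).re) := by
    rw [← norm_mul, Complex.Gamma_mul_Gamma_eq_betaIntegral hu hv, norm_mul]
    exact mul_le_mul_of_nonneg_left (norm_betaIntegral_le_beta hu hv) (norm_nonneg _)
  rw [div_mul_div_comm, div_le_iff₀ (mul_pos hΓu hΓv)]
  exact hbeta.trans_eq (by ring)

lemma norm_Gamma_div_le_norm_Gamma_add_ofReal_div {z : ℂ} {t : ℝ} (hz : 0 < z.re) (ht : 0 < t) :
    ‖Complex.Gamma z‖ / Real.Gamma z.re ≤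
      ‖Complex.Gamma (z + t)‖ / Real.Gamma (z.re + t) := by
  have h := norm_Gamma_div_mul_norm_Gamma_div_le hz (v := t) (by simpa using ht)
  have hΓt := Real.Gamma_pos_of_pos ht
  rwa [Complex.Gamma_ofReal, Complex.norm_of_nonneg hΓt.le, ofReal_re, div_self hΓt.ne', mul_one,
    add_re, ofReal_re] at h

lemma norm_Gamma_one_half_add_mul_I_sq (y : ℝ) :
    ‖Complex.Gamma (1 / 2 + y * I)‖ ^ 2 = π / Real.cosh (π * y) := by
  have hconj : (1 : ℂ) - (1 / 2 + y * I) = (starRingEnd ℂ) (1 / 2 + y * I) := by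
    apply Complex.ext <;> norm_num
  have hsin : Complex.sin (π * (1 / 2 + y * I)) = (Real.cosh (π * y) : ℂ) := by
    rw [show (π : ℂ) * (1 / 2 + y * I) = ((π * y : ℝ) : ℂ) * I + π / 2 by push_cast; ring,
      Complex.sin_add_pi_div_two, Complex.cos_mul_I, Complex.ofReal_cosh]
  have hreflection := Complex.Gamma_mul_Gamma_one_sub (1 / 2 + y * I)
  rw [hconj, Complex.Gamma_conj, Complex.mul_conj, hsin, Complex.normSq_eq_norm_sq] at hreflection
  exact_mod_cast hreflection

lemma cosh_le_exp_abs (x : ℝ) : Real.cosh x ≤ Real.exp |x| := by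
  rw [← Real.cosh_abs, ← Real.cosh_add_sinh]
  exact le_add_of_nonneg_right (Real.sinh_nonneg_iff.2 (abs_nonneg x))

lemma exp_neg_le_norm_Gamma_one_half_add_mul_I_div (y : ℝ) :
    Real.exp (-(π * |y| / 2)) ≤ ‖Complex.Gamma (1 / 2 + y * I)‖ / Real.Gamma (1 / 2) := by
  rw [Real.Gamma_one_half_eq]
  refine le_of_sq_le_sq ?_ (by positivity)
  rw [div_pow, norm_Gamma_one_half_add_mul_I_sq, Real.sq_sqrt pi_pos.le,
    div_div_cancel_left' pi_ne_zero, ← Real.exp_nat_mul]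
  calc Real.exp ((2 : ℕ) * -(π * |y| / 2)) = (Real.exp |π * y|)⁻¹ := by
        rw [← Real.exp_neg, abs_mul, abs_of_pos pi_pos]
        congr 1; push_cast; ring
    _ ≤ (Real.cosh (π * y))⁻¹ := inv_anti₀ (Real.cosh_pos _) (cosh_le_exp_abs _)

lemma exp_neg_mul_Gamma_re_le_norm_Gamma {z : ℂ} (hz : 1 / 2 < z.re) :
    Real.exp (-(π * |z.im| / 2)) * Real.Gamma z.re ≤ ‖Complex.Gamma z‖ := by
  have hre : (1 / 2 + z.im * I : ℂ).re = 1 / 2 := by simp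
  have hshift : (1 / 2 + z.im * I : ℂ) + ((z.re - 1 / 2 : ℝ) : ℂ) = z := by
    apply Complex.ext <;> simp
  have hmono := norm_Gamma_div_le_norm_Gamma_add_ofReal_div (z := 1 / 2 + z.im * I)
    (by rw [hre]; norm_num) (sub_pos.2 hz)
  rw [hshift, hre, add_sub_cancel] at hmono
  rw [← le_div_iff₀ (Real.Gamma_pos_of_pos (by linarith))]
  exact (exp_neg_le_norm_Gamma_one_half_add_mul_I_div z.im).trans hmono

lemma exp_mul_log_sub_le_Gamma_add_one {x : ℝ} (hx : 0 ≤ x) :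
    Real.exp (x * Real.log x - x) ≤ Real.Gamma (x + 1) := by
  have hint := Real.GammaIntegral_convergent (s := x + 1) (by linarith)
  rw [Real.Gamma_eq_integral (by linarith), add_sub_cancel_right]
  rw [add_sub_cancel_right] at hint
  have hsub : Set.Ioi x ⊆ Set.Ioi 0 := Set.Ioi_subset_Ioi hx
  calc Real.exp (x * Real.log x - x) = ∫ t in Set.Ioi x, Real.exp (-t) * x ^ x := by
        have hpow : x ^ x = Real.exp (x * Real.log x) := by
          rcases hx.eq_or_lt with rfl | hx
          · simp
          · rw [Real.rpow_def_of_pos hx, mul_comm]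
        rw [MeasureTheory.integral_mul_const, integral_exp_neg_Ioi, hpow, ← Real.exp_add]
        congr 1; ring
    _ ≤ ∫ t in Set.Ioi x, Real.exp (-t) * t ^ x := by
        refine MeasureTheory.setIntegral_mono_on ((integrableOn_exp_neg_Ioi x).mul_const _)
          (hint.mono_set hsub) measurableSet_Ioi fun t ht ↦ ?_
        have hxt : x ≤ t := (Set.mem_Ioi.1 ht).le
        gcongr
    _ ≤ ∫ t in Set.Ioi 0, Real.exp (-t) * t ^ x := by
        refine MeasureTheory.setIntegral_mono_set hint ?_ hsub.eventuallyLE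
        filter_upwards [MeasureTheory.ae_restrict_mem measurableSet_Ioi] with t (ht : 0 < t)
        exact mul_nonneg (Real.exp_pos _).le (Real.rpow_nonneg ht.le _)

lemma norm_inv_Gamma_le {z : ℂ} (hz : 0 < z.re) :
    ‖(Complex.Gamma z)⁻¹‖ ≤
      ‖z‖ * Real.exp (π * |z.im| / 2 - z.re * Real.log z.re + z.re) := by
  have hz0 : z ≠ 0 := fun h ↦ by simp [h] at hz
  have hlower : Real.exp (-(π * |z.im| / 2) + (z.re * Real.log z.re - z.re)) ≤
      ‖Complex.Gamma (z + 1)‖ := by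
    have h := exp_neg_mul_Gamma_re_le_norm_Gamma (z := z + 1) (by rw [add_re, one_re]; linarith)
    rw [add_re, one_re, add_im, one_im, add_zero] at h
    rw [Real.exp_add]
    exact (mul_le_mul_of_nonneg_left (exp_mul_log_sub_le_Gamma_add_one hz.le)
      (Real.exp_pos _).le).trans h
  calc ‖(Complex.Gamma z)⁻¹‖ = ‖z‖ * ‖Complex.Gamma (z + 1)‖⁻¹ := by
        rw [Complex.Gamma_add_one z hz0, norm_mul, norm_inv, mul_inv,
          mul_inv_cancel_left₀ (norm_ne_zero_iff.2 hz0)]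
    _ ≤ ‖z‖ * (Real.exp (-(π * |z.im| / 2) + (z.re * Real.log z.re - z.re)))⁻¹ := by gcongr
    _ = ‖z‖ * Real.exp (π * |z.im| / 2 - z.re * Real.log z.re + z.re) := by
        rw [← Real.exp_neg]; congr 2; ring

lemma add_mul_le_mul_exp_add {x b d s : ℝ} (hx : 0 ≤ x) (hb : 0 ≤ b) (hd : 0 < d) (hs : 0 ≤ s) :
    x + b * s ≤ (1 + b / d) * Real.exp (x + d * s) := by
  calc x + b * s ≤ (1 + b / d) * (x + d * s) := by
        have hexpand : (1 + b / d) * (x + d * s) = x + b * s + (b / d * x + d * s) := by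
          field_simp; ring
        rw [hexpand]
        exact le_add_of_nonneg_right (by positivity)
    _ ≤ (1 + b / d) * Real.exp (x + d * s) := by
        gcongr
        linarith [Real.add_one_le_exp (x + d * s)]

lemma norm_inv_Gamma_ofReal_add_mul_I_le {ρ t d : ℝ} (hρ : 0 < ρ) (ht : 0 < t) (hd : 0 < d)
    (b s : ℝ) :
    ‖(Complex.Gamma (ρ * t + b * s * I))⁻¹‖ ≤ (1 + |b| / d) *
      Real.exp (ρ * (2 - Real.log ρ) * t - ρ * (t * Real.log t) + (π * |b| / 2 + d) * |s|) := by
  set z : ℂ := ρ * t + b * s * I with hz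
  have hre : z.re = ρ * t := by simp [hz]
  have him : |z.im| = |b| * |s| := by simp [hz, abs_mul]
  have hρt : 0 < ρ * t := mul_pos hρ ht
  have hnorm : ‖z‖ ≤ (1 + |b| / d) * Real.exp (ρ * t + d * |s|) := by
    have h := Complex.norm_le_abs_re_add_abs_im z
    rw [him, hre, abs_of_pos hρt] at h
    exact h.trans (add_mul_le_mul_exp_add hρt.le (abs_nonneg b) hd (abs_nonneg s))
  have hΓ := norm_inv_Gamma_le (z := z) (hre ▸ hρt)
  rw [him, hre, Real.log_mul hρ.ne' ht.ne'] at hΓ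
  calc ‖(Complex.Gamma z)⁻¹‖
      ≤ (1 + |b| / d) * Real.exp (ρ * t + d * |s|) * Real.exp
          (π * (|b| * |s|) / 2 - ρ * t * (Real.log ρ + Real.log t) + ρ * t) :=
        hΓ.trans (by gcongr)
    _ = _ := by rw [mul_assoc, ← Real.exp_add]; congr 2; ring

-- The Fenchel-Young inequality for the convex function `t ↦ t * log t`.
lemma mul_le_mul_log_add_exp_sub_one {t : ℝ} (ht : 0 ≤ t) (c : ℝ) :
    t * c ≤ t * Real.log t + Real.exp (c - 1) := by
  rcases ht.eq_or_lt with rfl | ht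
  · simpa using (Real.exp_pos (c - 1)).le
  · have h := Real.add_one_le_exp (c - 1 - Real.log t)
    rw [Real.exp_sub _ (Real.log t), Real.exp_log ht, le_div_iff₀ ht] at h
    linarith

lemma mul_log_add_le_mul_log_add {t s : ℝ} (ht : 0 < t) (hs : 0 ≤ s) :
    t * Real.log (t + s) ≤ t * Real.log t + s := by
  have h := mul_le_mul_log_add_exp_sub_one ht.le (Real.log (t + s) + 1)
  rw [add_sub_cancel_right, Real.exp_log (by positivity)] at h
  linarith

lemma mul_sub_mul_mul_log_le_mul_exp {q t : ℝ} (hq : 0 < q) (ht : 0 ≤ t) (c : ℝ) :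
    c * t - q * (t * Real.log t) ≤ q * Real.exp (c / q - 1) := by
  have h := mul_le_mul_of_nonneg_left (mul_le_mul_log_add_exp_sub_one ht (c / q)) hq.le
  have hcancel : q * (t * (c / q)) = c * t := by field_simp
  linarith

lemma mul_sub_mul_mul_log_le_sub_mul_log_add {ρ α t s : ℝ} (hα : 0 ≤ α) (hαρ : α < ρ)
    (ht : 0 < t) (hs : 0 ≤ s) (c : ℝ) :
    c * t - ρ * (t * Real.log t) ≤
      (ρ - α) * Real.exp (c / (ρ - α) - 1) - α * (t * Real.log (t + s)) + α * s := by
  have hlinear := mul_sub_mul_mul_log_le_mul_exp (sub_pos.2 hαρ) ht.le c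
  have hlog := mul_le_mul_of_nonneg_left (mul_log_add_le_mul_log_add ht hs) hα
  linarith

theorem stmt13_general {ρ b M γ : ℝ} (hρ : 0 < ρ) (hM : 0 < M) (hγ : π * |b| / 2 < γ) :
    ∃ A > (0 : ℝ), ∃ α > (0 : ℝ), ∃ β > (0 : ℝ), ∀ t : ℝ, 0 < t → ∀ (s : ℝ) (a : ℂ),
      ‖a‖ ≤ M ^ t * Real.exp (-γ * |s|) →
      ‖a / Complex.Gamma (ρ * t + b * s * I)‖ ≤
        A * Real.exp (-α * t * Real.log (t + |s|) - β * |s|) := by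
  -- The surplus `γ - π |b| / 2` pays three times: for the factor `‖z‖` in the bound of `1 / Γ z`,
  -- for the passage from `t log t` to `t log (t + |s|)`, and for the final decay in `s`.
  obtain ⟨β, hβ, rfl⟩ : ∃ β > 0, γ = π * |b| / 2 + 3 * β :=
    ⟨(γ - π * |b| / 2) / 3, by linarith, by ring⟩
  obtain ⟨α, hα, hαρ, hαβ⟩ : ∃ α > 0, α < ρ ∧ α ≤ β :=
    ⟨min (ρ / 2) β, lt_min (half_pos hρ) hβ, (min_le_left _ _).trans_lt (half_lt_self hρ),
      min_le_right _ _⟩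
  set c := Real.log M + ρ * (2 - Real.log ρ)
  set B := (ρ - α) * Real.exp (c / (ρ - α) - 1)
  refine ⟨(1 + |b| / β) * Real.exp B, by positivity, α, hα, β, hβ, fun t ht s a ha ↦ ?_⟩
  have hexponent : c * t - ρ * (t * Real.log t) - 2 * β * |s| ≤
      B + (-α * t * Real.log (t + |s|) - β * |s|) := by
    have hlog := mul_sub_mul_mul_log_le_sub_mul_log_add hα.le hαρ ht (abs_nonneg s) c
    have hs := mul_le_mul_of_nonneg_right hαβ (abs_nonneg s)
    linarith
  rw [Real.rpow_def_of_pos hM] at ha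
  rw [div_eq_mul_inv, norm_mul]
  calc ‖a‖ * ‖(Complex.Gamma (ρ * t + b * s * I))⁻¹‖
      ≤ Real.exp (Real.log M * t) * Real.exp (-(π * |b| / 2 + 3 * β) * |s|) *
          ((1 + |b| / β) * Real.exp
            (ρ * (2 - Real.log ρ) * t - ρ * (t * Real.log t) + (π * |b| / 2 + β) * |s|)) :=
        mul_le_mul ha (norm_inv_Gamma_ofReal_add_mul_I_le hρ ht hβ b s)
          (norm_nonneg _) (by positivity)
    _ = (1 + |b| / β) * Real.exp (c * t - ρ * (t * Real.log t) - 2 * β * |s|) := by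
        rw [mul_left_comm, ← Real.exp_add, ← Real.exp_add]
        congr 2; ring
    _ ≤ (1 + |b| / β) * Real.exp (B + (-α * t * Real.log (t + |s|) - β * |s|)) := by gcongr
    _ = _ := by rw [Real.exp_add B, mul_assoc (1 + |b| / β)]

/-- Estimate (22) of the paper: combining `|κ_m| ≤ K₀^m`, the Fourier coefficient
bounds `|θ_{n,m}| ≤ C^m e^{-γ|n|}` with `γ > π²/ln E`, and the Gamma lower bound,
the terms of the left-tail series decay super-exponentially in `m` and exponentially
in `n`. -/
theorem stmt13 (E r K₀ C γ : ℝ) (hE : 1 < E) (hr0 : 0 < r) (hr1 : r < 1)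
    (hK₀ : 0 < K₀) (hC : 0 < C) (hγ : π ^ 2 / Real.log E < γ)
    (κ : ℕ → ℂ) (θ : ℤ → ℕ → ℂ)
    (hκ : ∀ m : ℕ, 1 ≤ m → ‖κ m‖ ≤ K₀ ^ m)
    (hθ : ∀ (n : ℤ) (m : ℕ), 1 ≤ m → ‖θ n m‖ ≤ C ^ m * Real.exp (-γ * |(n : ℝ)|)) :
    ∃ A > (0 : ℝ), ∃ α > (0 : ℝ), ∃ β > (0 : ℝ), ∀ (m : ℕ), 1 ≤ m → ∀ n : ℤ,
      ‖κ m * θ n m / Complex.Gamma (-(2 * (π : ℂ) * Complex.I * (n : ℂ) +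
          (m : ℂ) * (Real.log r : ℂ)) / (Real.log E : ℂ))‖ ≤
        A * Real.exp (-α * m * Real.log ((m : ℝ) + |(n : ℝ)|) - β * |(n : ℝ)|) := by
  have hlogE : 0 < Real.log E := Real.log_pos hE
  have hρ : 0 < -Real.log r / Real.log E := div_pos (neg_pos.2 (Real.log_neg hr0 hr1)) hlogE
  have hγ' : π * |-(2 * π / Real.log E)| / 2 < γ := by
    rw [abs_neg, abs_of_pos (by positivity)]
    exact hγ.trans_eq' (by ring)
  obtain ⟨A, hA, α, hα, β, hβ, hbound⟩ := stmt13_general hρ (mul_pos hK₀ hC) hγ'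
  refine ⟨A, hA, α, hα, β, hβ, fun m hm n ↦ ?_⟩
  have hκθ : ‖κ m * θ n m‖ ≤ (K₀ * C) ^ (m : ℝ) * Real.exp (-γ * |(n : ℝ)|) := by
    rw [norm_mul, Real.rpow_natCast, mul_pow, mul_assoc]
    exact mul_le_mul (hκ m hm) (hθ n m hm) (norm_nonneg _) (by positivity)
  convert hbound m (by exact_mod_cast hm) n _ hκθ using 4
  push_cast
  ring
end

section
/- Let f be holomorphic on an open neighborhood of 0 in ℂ with f(0) = 0 and f'(0) = 1, and suppose (3 − f(z))·f(z/3) = f(z) + f(z)² for all z in a neighborhood of 0. Let κ_N := f^{(N)}(0)/N! denote the Taylor coefficients of f. Then for every N ≥ 2: (3^{1−N} − 1)·κ_N = ∑_{j=1}^{N−1} κ_j·κ_{N−j}·(1 + 3^{−j}). -/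
open Filter Topology

/-!
Near `0`, passing to Taylor series turns sums and products of functions into sums and products of
formal power series, and the substitution `z ↦ c * z` into rescaling. The functional equation for
`f` therefore becomes `(a - φ(X)) * φ(cX) = φ(X) + φ(X)²` for its Taylor series `φ`, that is
`(φ(X) + φ(cX)) * φ(X) = a * φ(cX) - φ(X)`, and the recurrence compares the coefficients of `X ^ N`.
-/

section FormalRecurrence

open PowerSeries

lemma coeff_mul_of_constantCoeff_eq_zero {R : Type*} [Semiring R] {φ ψ : R⟦X⟧}
    (hφ : constantCoeff φ = 0) (hψ : constantCoeff ψ = 0) (n : ℕ) :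
    coeff n (φ * ψ) = ∑ j ∈ Finset.Icc 1 (n - 1), coeff j φ * coeff (n - j) ψ := by
  rw [coeff_mul, Finset.Nat.sum_antidiagonal_eq_sum_range_succ (fun i j => coeff i φ * coeff j ψ)]
  refine (Finset.sum_subset (fun j hj => ?_) fun j hj hj' => ?_).symm
  · rw [Finset.mem_Icc] at hj
    rw [Finset.mem_range]
    omega
  · obtain rfl | rfl : j = 0 ∨ j = n := by
      rw [Finset.mem_range] at hj
      rw [Finset.mem_Icc] at hj'
      omega
    · rw [coeff_zero_eq_constantCoeff_apply, hφ, zero_mul]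
    · rw [Nat.sub_self, coeff_zero_eq_constantCoeff_apply, hψ, mul_zero]

theorem coeff_recurrence_of_sub_mul_rescale_eq {R : Type*} [CommRing R] {φ : R⟦X⟧} {a c : R}
    (hφ : constantCoeff φ = 0) (hφ_eq : (C a - φ) * rescale c φ = φ + φ ^ 2) (n : ℕ) :
    (a * c ^ n - 1) * coeff n φ =
      ∑ j ∈ Finset.Icc 1 (n - 1), coeff j φ * coeff (n - j) φ * (1 + c ^ j) := by
  have hsum : constantCoeff (φ + rescale c φ) = 0 := by
    rw [map_add, hφ, zero_add, ← coeff_zero_eq_constantCoeff_apply, coeff_rescale,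
      coeff_zero_eq_constantCoeff_apply, hφ, mul_zero]
  calc (a * c ^ n - 1) * coeff n φ
      = coeff n (C a * rescale c φ - φ) := by
        rw [map_sub, coeff_C_mul, coeff_rescale]
        ring
    _ = coeff n ((φ + rescale c φ) * φ) := by
        congr 1
        linear_combination hφ_eq
    _ = ∑ j ∈ Finset.Icc 1 (n - 1), coeff j (φ + rescale c φ) * coeff (n - j) φ :=
        coeff_mul_of_constantCoeff_eq_zero hsum hφ n
    _ = ∑ j ∈ Finset.Icc 1 (n - 1), coeff j φ * coeff (n - j) φ * (1 + c ^ j) := by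
        refine Finset.sum_congr rfl fun j _ => ?_
        rw [map_add, coeff_rescale]
        ring

end FormalRecurrence

section TaylorSeries

open PowerSeries
open scoped ContDiff

variable {𝕜 : Type*} [NontriviallyNormedField 𝕜] {f g : 𝕜 → 𝕜} {x : 𝕜}

lemma iteratedDeriv_comp_const_smul_field {F : Type*} [NormedAddCommGroup F] [NormedSpace 𝕜 F]
    (f : 𝕜 → F) (c : 𝕜) (n : ℕ) (x : 𝕜) :
    iteratedDeriv n (fun z => f (c * z)) x = c ^ n • iteratedDeriv n f (c * x) := by
  induction n generalizing x with
  | zero => simp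
  | succ n ih =>
    rw [iteratedDeriv_succ, funext ih, deriv_fun_const_smul_field,
      deriv_comp_mul_left c (iteratedDeriv n f), ← iteratedDeriv_succ, smul_smul, pow_succ]

/-- The Taylor series of `f` at `x`, as a formal power series in the increment. It is defined for
every `f`, with junk coefficients where derivatives fail to exist or `n !` vanishes in `𝕜`. -/
noncomputable def taylorSeries (f : 𝕜 → 𝕜) (x : 𝕜) : 𝕜⟦X⟧ :=
  PowerSeries.mk fun n => iteratedDeriv n f x / (n.factorial : 𝕜)

lemma coeff_taylorSeries (f : 𝕜 → 𝕜) (x : 𝕜) (n : ℕ) :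
    coeff n (taylorSeries f x) = iteratedDeriv n f x / (n.factorial : 𝕜) :=
  coeff_mk _ _

lemma constantCoeff_taylorSeries (f : 𝕜 → 𝕜) (x : 𝕜) :
    constantCoeff (taylorSeries f x) = f x := by
  simp [← coeff_zero_eq_constantCoeff_apply, coeff_taylorSeries]

lemma taylorSeries_congr (h : f =ᶠ[𝓝 x] g) : taylorSeries f x = taylorSeries g x := by
  ext n
  rw [coeff_taylorSeries, coeff_taylorSeries, h.iteratedDeriv_eq]

lemma taylorSeries_const_sub (a : 𝕜) (f : 𝕜 → 𝕜) (x : 𝕜) :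
    taylorSeries (fun z => a - f z) x = C a - taylorSeries f x := by
  ext n
  rw [map_sub, coeff_taylorSeries, coeff_taylorSeries, coeff_C]
  rcases n.eq_zero_or_pos with rfl | hn
  · simp
  · rw [iteratedDeriv_const_sub hn, iteratedDeriv_neg, if_neg hn.ne', neg_div, zero_sub]

lemma taylorSeries_add (hf : ContDiffAt 𝕜 ∞ f x) (hg : ContDiffAt 𝕜 ∞ g x) :
    taylorSeries (f + g) x = taylorSeries f x + taylorSeries g x := by
  ext n
  rw [map_add, coeff_taylorSeries, coeff_taylorSeries, coeff_taylorSeries,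
    iteratedDeriv_add (contDiffAt_infty.mp hf n) (contDiffAt_infty.mp hg n), add_div]

lemma taylorSeries_mul [CharZero 𝕜] (hf : ContDiffAt 𝕜 ∞ f x) (hg : ContDiffAt 𝕜 ∞ g x) :
    taylorSeries (f * g) x = taylorSeries f x * taylorSeries g x := by
  ext n
  rw [coeff_mul, coeff_taylorSeries,
    iteratedDeriv_mul (contDiffAt_infty.mp hf n) (contDiffAt_infty.mp hg n), Finset.sum_div,
    Finset.Nat.sum_antidiagonal_eq_sum_range_succ
      (fun i j => coeff i (taylorSeries f x) * coeff j (taylorSeries g x))]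
  refine Finset.sum_congr rfl fun i hi => ?_
  have hin : i ≤ n := Finset.mem_range_succ_iff.mp hi
  have hn : (n.factorial : 𝕜) ≠ 0 := Nat.cast_ne_zero.mpr n.factorial_ne_zero
  rw [coeff_taylorSeries, coeff_taylorSeries, Nat.cast_choose 𝕜 hin]
  field_simp

lemma taylorSeries_comp_const_mul (f : 𝕜 → 𝕜) (c x : 𝕜) :
    taylorSeries (fun z => f (c * z)) x = rescale c (taylorSeries f (c * x)) := by
  ext n
  rw [coeff_rescale, coeff_taylorSeries, coeff_taylorSeries, iteratedDeriv_comp_const_smul_field,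
    smul_eq_mul, mul_div_assoc]

lemma taylorSeries_sub_mul_rescale_eq [CharZero 𝕜] {a c : 𝕜} (hf : ContDiffAt 𝕜 ∞ f 0)
    (hFE : ∀ᶠ z in 𝓝 0, (a - f z) * f (c * z) = f z + f z ^ 2) :
    (C a - taylorSeries f 0) * rescale c (taylorSeries f 0) =
      taylorSeries f 0 + taylorSeries f 0 ^ 2 := by
  have hf_comp : ContDiffAt 𝕜 ∞ (fun z => f (c * z)) 0 :=
    ContDiffAt.comp 0 (by rwa [mul_zero]) (contDiffAt_const.mul contDiffAt_id)
  have hf_mul : ContDiffAt 𝕜 ∞ (f * f) 0 := hf.mul hf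
  have hFE_fun : (fun z => a - f z) * (fun z => f (c * z)) =ᶠ[𝓝 0] f + f * f := by
    filter_upwards [hFE] with z hz
    simpa only [Pi.mul_apply, Pi.add_apply, sq] using hz
  have hseries := taylorSeries_congr hFE_fun
  rwa [taylorSeries_mul (contDiffAt_const.sub hf) hf_comp, taylorSeries_add hf hf_mul,
    taylorSeries_mul hf hf, taylorSeries_const_sub, taylorSeries_comp_const_mul, mul_zero,
    ← sq] at hseries

theorem stmt15_general [CharZero 𝕜] {a c : 𝕜} (hf : ContDiffAt 𝕜 ∞ f 0) (hf0 : f 0 = 0)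
    (hFE : ∀ᶠ z in 𝓝 0, (a - f z) * f (c * z) = f z + f z ^ 2)
    {κ : ℕ → 𝕜} (hκ : ∀ n, κ n = iteratedDeriv n f 0 / (n.factorial : 𝕜)) (n : ℕ) :
    (a * c ^ n - 1) * κ n =
      ∑ j ∈ Finset.Icc 1 (n - 1), κ j * κ (n - j) * (1 + c ^ j) := by
  simpa only [coeff_taylorSeries, ← hκ] using
    coeff_recurrence_of_sub_mul_rescale_eq ((constantCoeff_taylorSeries f 0).trans hf0)
      (taylorSeries_sub_mul_rescale_eq hf hFE) n

end TaylorSeries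

/-- Recurrence (38) for the Taylor coefficients of `f = Φ⁻¹`, the inverse Schröder
linearizer for `G(z) = (z+z²)/(3−z)`: the functional equation
`(3 − f(z))·f(z/3) = f(z) + f(z)²` yields
`(3^{1−N} − 1)·κ_N = ∑_{j=1}^{N−1} κ_j κ_{N−j} (1 + 3^{−j})` for `N ≥ 2`. -/
theorem stmt15 (f : ℂ → ℂ) (hf : AnalyticAt ℂ f 0) (hf0 : f 0 = 0)
    (hf'0 : deriv f 0 = 1)
    (hFE : ∀ᶠ z in 𝓝 (0 : ℂ), (3 - f z) * f (z / 3) = f z + (f z) ^ 2)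
    (κ : ℕ → ℂ) (hκ : ∀ N : ℕ, κ N = iteratedDeriv N f 0 / (N.factorial : ℂ)) :
    ∀ N : ℕ, 2 ≤ N →
      ((3 : ℂ) ^ (1 - (N : ℤ)) - 1) * κ N =
        ∑ j ∈ Finset.Icc 1 (N - 1), κ j * κ (N - j) * (1 + (3 : ℂ) ^ (-(j : ℤ))) := by
  intro N _
  simpa [zpow_sub₀, div_eq_mul_inv] using
    stmt15_general (a := 3) (c := 3⁻¹) hf.contDiffAt hf0
      (by simpa only [div_eq_inv_mul] using hFE) hκ N
end

section
/- Let Π : ℂ → ℂ and let ω ∈ ℂ be nonzero. Suppose Π is holomorphic at ω/2 with Π(ω/2) = 3 and Π'(ω/2) ≠ 0, and suppose Π(2z)·(3 − Π(z)) = Π(z) + Π(z)² for all z ≠ ω/2 in some punctured neighborhood of ω/2. Then lim_{w → ω, w ≠ ω} (w − ω)·Π(w) = −24 / Π'(ω/2); in particular Π has a simple pole at ω with residue −24/Π'(ω/2). -/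
open Filter Topology

/-! At a point `z₀` with `Π(z₀) = 3` the denominator of `G(Π(z))` has a simple zero with derivative
`-Π'(z₀)`, while the numerator tends to `3 + 3² = 12`. Hence `z ↦ Π(2z) = G(Π(z))` has a simple
pole at `z₀` with residue `-12 / Π'(z₀)`, and the substitution `w = 2z` multiplies it by `2`. -/

section ResidueLimits

variable {𝕜 : Type*} [NontriviallyNormedField 𝕜]

theorem tendsto_sub_mul_div_of_hasDerivAt {f g : 𝕜 → 𝕜} {a L g' : 𝕜}
    (hf : Tendsto f (𝓝[≠] a) (𝓝 L)) (hg : HasDerivAt g g' a) (hga : g a = 0) (hg' : g' ≠ 0) :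
    Tendsto (fun z => (z - a) * (f z / g z)) (𝓝[≠] a) (𝓝 (L / g')) := by
  refine (hf.div hg.tendsto_slope hg').congr fun z => ?_
  rw [Pi.div_apply, slope_def_field, hga, sub_zero, div_div_eq_mul_div, mul_comm (f z),
    mul_div_assoc]

theorem tendsto_sub_mul_of_comp_const_mul {f : 𝕜 → 𝕜} {c ω L : 𝕜} (hc : c ≠ 0)
    (h : Tendsto (fun z => (z - ω / c) * f (c * z)) (𝓝[≠] (ω / c)) (𝓝 L)) :
    Tendsto (fun w => (w - ω) * f w) (𝓝[≠] ω) (𝓝 (c * L)) := by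
  have hscale : Tendsto (· / c) (𝓝[≠] ω) (𝓝[≠] (ω / c)) :=
    ((hasDerivAt_id ω).div_const c).tendsto_nhdsNE (one_div_ne_zero hc)
  refine ((h.comp hscale).const_mul c).congr fun w => ?_
  rw [Function.comp_apply, mul_div_cancel₀ w hc, ← mul_assoc, mul_sub, mul_div_cancel₀ w hc,
    mul_div_cancel₀ ω hc]

-- `hFE` is the Poincaré equation `P (c * z) = G (P z)` for `G = p / q`, with denominators cleared.
theorem stmt18_general {P p q : 𝕜 → 𝕜} {c ω P' q' : 𝕜} (hc : c ≠ 0)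
    (hP : HasDerivAt P P' (ω / c)) (hP' : P' ≠ 0)
    (hp : ContinuousAt p (P (ω / c)))
    (hq : HasDerivAt q q' (P (ω / c))) (hqP : q (P (ω / c)) = 0) (hq' : q' ≠ 0)
    (hFE : ∀ᶠ z in 𝓝[≠] (ω / c), P (c * z) * q (P z) = p (P z)) :
    Tendsto (fun w => (w - ω) * P w) (𝓝[≠] ω) (𝓝 (c * (p (P (ω / c)) / (q' * P')))) := by
  have hqP' : HasDerivAt (q ∘ P) (q' * P') (ω / c) := hq.comp (ω / c) hP
  have hpP : Tendsto (p ∘ P) (𝓝[≠] (ω / c)) (𝓝 (p (P (ω / c)))) :=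
    (hp.comp hP.continuousAt).tendsto.mono_left nhdsWithin_le_nhds
  have hquot := tendsto_sub_mul_div_of_hasDerivAt hpP hqP' hqP (mul_ne_zero hq' hP')
  have hPc : ∀ᶠ z in 𝓝[≠] (ω / c), (p ∘ P) z / (q ∘ P) z = P (c * z) := by
    filter_upwards [hFE, hqP'.eventually_ne (c := 0) (mul_ne_zero hq' hP')] with z hz hqz
    exact (eq_div_of_mul_eq hqz hz).symm
  refine tendsto_sub_mul_of_comp_const_mul hc (hquot.congr' ?_)
  filter_upwards [hPc] with z hz
  rw [hz]

end ResidueLimits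

/-- Residue formula (36) of the paper (primary poles): for the Poincaré function of
`G(z) = (z+z²)/(3−z)` (so `Π(2z)(3 − Π(z)) = Π(z) + Π(z)²`), if `Π(ω/2) = 3` and
`Π'(ω/2) ≠ 0` then `Π` has a simple pole at `ω` with residue `−24/Π'(ω/2)`. -/
theorem stmt18 (Poin : ℂ → ℂ) (ω : ℂ) (hω : ω ≠ 0)
    (hA : AnalyticAt ℂ Poin (ω / 2)) (hval : Poin (ω / 2) = 3)
    (hder : deriv Poin (ω / 2) ≠ 0)
    (hFE : ∀ᶠ z in 𝓝[≠] (ω / 2), Poin (2 * z) * (3 - Poin z) = Poin z + (Poin z) ^ 2) :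
    Tendsto (fun w => (w - ω) * Poin w) (𝓝[≠] ω)
      (𝓝 (-24 / deriv Poin (ω / 2))) := by
  convert stmt18_general (p := fun x => x + x ^ 2) (q := fun x => 3 - x) two_ne_zero
    hA.differentiableAt.hasDerivAt hder (by fun_prop) ((hasDerivAt_id _).const_sub 3)
    (by simp [hval]) (neg_ne_zero.2 one_ne_zero) hFE using 2
  rw [hval]
  ring
end

section
/- Let Π : ℂ → ℂ, let ω ∈ ℂ be nonzero, and let R ∈ ℂ with R ≠ 0. Suppose Π(2z)·(3 − Π(z)) = Π(z) + Π(z)² for all z ≠ ω in some punctured neighborhood of ω, that ‖Π(z)‖ → ∞ as z → ω with z ≠ ω, and that lim_{z → ω, z ≠ ω} (z − ω)·Π(z) = R. Then lim_{w → 2ω, w ≠ 2ω} (w − 2ω)·Π(w) = −2R; in particular Π has a simple pole at 2ω with residue −2·R. -/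
open Filter Topology

/-!
Write the functional equation as `f (E z) = G (f z)` with `G = P / Q` and `deg P = deg Q + 1`. Then
`G x ~ c x` at infinity, where `c` is the quotient of the leading coefficients, so near a pole `ω`
of `f` we have `f (E z) ~ c f z`. Since `E z - E ω = E (z - ω)`, the residue is multiplied by `E c`.
For `G(z) = (z + z²) / (3 - z)` we have `E = 2` and `c = -1`.
-/

open Asymptotics Bornology Polynomial

section NormedField

variable {𝕜 : Type*} [NormedField 𝕜]

theorem isEquivalent_cobounded_eval_div (P Q : 𝕜[X]) :
    (fun x => P.eval x / Q.eval x) ~[cobounded 𝕜]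
      fun x => P.leadingCoeff / Q.leadingCoeff * x ^ (P.natDegree - Q.natDegree : ℤ) := by
  have hdiv := (isEquivalent_cobounded_leading_monomial (P := P)).div
    (isEquivalent_cobounded_leading_monomial (P := Q))
  refine hdiv.trans_eventuallyEq ?_
  filter_upwards [eventually_ne_cobounded (0 : 𝕜)] with x hx
  rw [Pi.div_apply, mul_div_mul_comm, zpow_sub₀ hx, zpow_natCast, zpow_natCast]

theorem eventually_cobounded_eval_ne_zero_s19 {Q : 𝕜[X]} (hQ : Q ≠ 0) :
    ∀ᶠ x in cobounded 𝕜, Q.eval x ≠ 0 :=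
  (eventually_cofinite_not_isRoot hQ).filter_mono (le_cofinite 𝕜)

theorem tendsto_sub_mul_of_isEquivalent_comp_mul_left {f : 𝕜 → 𝕜}
    {E ω c R : 𝕜} (hE : E ≠ 0) (hf : (fun z => f (E * z)) ~[𝓝[≠] ω] fun z => c * f z)
    (hres : Tendsto (fun z => (z - ω) * f z) (𝓝[≠] ω) (𝓝 R)) :
    Tendsto (fun w => (w - E * ω) * f w) (𝓝[≠] (E * ω)) (𝓝 (E * c * R)) := by
  have hmap : map (E * ·) (𝓝[≠] ω) = 𝓝[≠] (E * ω) :=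
    (Homeomorph.mulLeft₀ E hE).map_punctured_nhds_eq ω
  have hequiv : (fun z => E * c * ((z - ω) * f z)) ~[𝓝[≠] ω]
      fun z => (E * z - E * ω) * f (E * z) := by
    refine (IsEquivalent.refl.mul hf.symm).congr_left (.of_forall fun z => ?_)
    simp only [Pi.mul_apply]
    ring
  rw [← hmap, tendsto_map'_iff]
  exact hequiv.tendsto_nhds (hres.const_mul (E * c))

theorem isEquivalent_const_mul_of_mul_eval_eq_eval {α : Type*} {l : Filter α}
    {f g : α → 𝕜} {P Q : 𝕜[X]} (hQ : Q ≠ 0) (hdeg : P.degree = Q.degree + 1)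
    (hFE : ∀ᶠ a in l, g a * Q.eval (f a) = P.eval (f a)) (hf : Tendsto f l (cobounded 𝕜)) :
    g ~[l] fun a => P.leadingCoeff / Q.leadingCoeff * f a := by
  have hnat : P.natDegree = Q.natDegree + 1 :=
    natDegree_eq_of_degree_eq_some (by rw [hdeg, degree_eq_natDegree hQ]; rfl)
  have hG : (fun x => P.eval x / Q.eval x) ~[cobounded 𝕜]
      fun x => P.leadingCoeff / Q.leadingCoeff * x := by
    simpa [hnat] using isEquivalent_cobounded_eval_div P Q
  refine (hG.comp_tendsto hf).congr_left ?_
  filter_upwards [hFE, hf.eventually (eventually_cobounded_eval_ne_zero_s19 hQ)] with a ha hne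
  exact (eq_div_of_mul_eq hne ha).symm

theorem stmt19_general {f : 𝕜 → 𝕜} {P Q : 𝕜[X]} {E ω R : 𝕜}
    (hE : E ≠ 0) (hQ : Q ≠ 0) (hdeg : P.degree = Q.degree + 1)
    (hFE : ∀ᶠ z in 𝓝[≠] ω, f (E * z) * Q.eval (f z) = P.eval (f z))
    (hblow : Tendsto f (𝓝[≠] ω) (cobounded 𝕜))
    (hres : Tendsto (fun z => (z - ω) * f z) (𝓝[≠] ω) (𝓝 R)) :
    Tendsto (fun w => (w - E * ω) * f w) (𝓝[≠] (E * ω))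
      (𝓝 (E * (P.leadingCoeff / Q.leadingCoeff) * R)) :=
  tendsto_sub_mul_of_isEquivalent_comp_mul_left hE
    (isEquivalent_const_mul_of_mul_eval_eq_eval hQ hdeg hFE hblow) hres

theorem tendsto_sub_mul_of_quadratic_div_linear {f : 𝕜 → 𝕜}
    {a b c d e E ω R : 𝕜} (hE : E ≠ 0) (ha : a ≠ 0) (hd : d ≠ 0)
    (hFE : ∀ᶠ z in 𝓝[≠] ω, f (E * z) * (d * f z + e) = a * f z ^ 2 + b * f z + c)
    (hblow : Tendsto f (𝓝[≠] ω) (cobounded 𝕜))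
    (hres : Tendsto (fun z => (z - ω) * f z) (𝓝[≠] ω) (𝓝 R)) :
    Tendsto (fun w => (w - E * ω) * f w) (𝓝[≠] (E * ω)) (𝓝 (E * (a / d) * R)) := by
  have hQ : (C d * X + C e).degree = 1 := degree_linear hd
  have hdeg : (C a * X ^ 2 + C b * X + C c).degree = (C d * X + C e).degree + 1 := by
    rw [hQ, degree_quadratic ha, one_add_one_eq_two]
  simpa only [leadingCoeff_quadratic ha, leadingCoeff_linear hd] using
    stmt19_general hE (ne_zero_of_coe_le_degree hQ.ge) hdeg (by simpa using hFE) hblow hres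

end NormedField

/-- Residue propagation (formula (36), case `k = 1`): for the Poincaré function of
`G(z) = (z+z²)/(3−z)` (so `Π(2z)(3 − Π(z)) = Π(z) + Π(z)²`), if `Π` has a simple pole
at `ω` with residue `R ≠ 0`, then `Π` has a simple pole at `2ω` with residue `−2R`. -/
theorem stmt19 (Poin : ℂ → ℂ) (ω : ℂ) (hω : ω ≠ 0) (R : ℂ) (hR : R ≠ 0)
    (hFE : ∀ᶠ z in 𝓝[≠] ω, Poin (2 * z) * (3 - Poin z) = Poin z + (Poin z) ^ 2)
    (hblow : Tendsto (fun z => ‖Poin z‖) (𝓝[≠] ω) atTop)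
    (hres : Tendsto (fun z => (z - ω) * Poin z) (𝓝[≠] ω) (𝓝 R)) :
    Tendsto (fun w => (w - 2 * ω) * Poin w) (𝓝[≠] (2 * ω)) (𝓝 (-2 * R)) := by
  have hFE' : ∀ᶠ z in 𝓝[≠] ω,
      Poin (2 * z) * (-1 * Poin z + 3) = 1 * Poin z ^ 2 + 1 * Poin z + 0 :=
    hFE.mono fun z hz => by linear_combination hz
  simpa using tendsto_sub_mul_of_quadratic_div_linear two_ne_zero one_ne_zero
    (neg_ne_zero.mpr one_ne_zero) hFE' (tendsto_norm_atTop_iff_cobounded.mp hblow) hres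
end
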